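/- arXiv:1204.6454 — 15 statements merged into one kernel-verified Lean document; each statement's English description precedes it below -/
import Mathlib

section
/- Let a, b > 0 with a - 2b ≤ 0. If (f, g) is a C^1 solution on [0,∞) of the radial system f'(r) + (2/r) f(r) = g(r)(f(r)^2 - a g(r)^2 + b), g'(r) = f(r)(1 - g(r)^2) with f(0) = 0 and such that (f(r), g(r)) → (0,0) as r → ∞, then g(0) = 0 (and hence (f,g) is identically zero). -/
/-!
The proof rests on the energy `H = f² (1 - g²) / 2 + a g⁴ / 4 - b g² / 2`, which along a solution
satisfies `H' = -(2 / r) f² (1 - g²)`.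

The quantity `1 - g²` solves the linear equation `w' = -2 f g w`, so its sign is constant, and it is
positive since `g → 0` at infinity (`radial_one_sub_sq_pos`). Hence `H` is nonincreasing; its limit
at infinity is `0`, so `H ≥ 0`. At the origin `H(0) = g(0)² (a g(0)² - 2 b) / 4`, where the second
factor is negative because `g(0)² < 1` and `a ≤ 2 b`; this forces `g(0) = 0`. Then `H(0) = 0`, so
`H` vanishes identically, its derivative gives `f = 0`, and `H = 0` with `f = 0` gives `g = 0`.
-/

theorem antitoneOn_Ici_of_hasDerivAt_nonpos {F F' : ℝ → ℝ} (hF : ContinuousOn F (Set.Ici 0))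
    (hd : ∀ r, 0 < r → HasDerivAt F (F' r) r) (hn : ∀ r, 0 < r → F' r ≤ 0) :
    AntitoneOn F (Set.Ici 0) := by
  apply antitoneOn_of_deriv_nonpos (convex_Ici 0) hF
  · intro r hr
    rw [interior_Ici] at hr
    exact (hd r hr).differentiableAt.differentiableWithinAt
  · intro r hr
    rw [interior_Ici] at hr
    rw [(hd r hr).deriv]
    exact hn r hr

/-- The region `g² < 1` is invariant: multiplying `1 - g²` by the integrating factor
`exp (∫ 2 f g)` makes it constant, and it is positive near infinity. -/
theorem radial_one_sub_sq_pos {f g : ℝ → ℝ}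
    (hfc : ContinuousOn f (Set.Ici 0)) (hgc : ContinuousOn g (Set.Ici 0))
    (hg : ∀ r : ℝ, 0 < r → HasDerivAt g (f r * (1 - (g r) ^ 2)) r)
    (hlim : Filter.Tendsto g Filter.atTop (nhds 0)) {r : ℝ} (hr : 0 ≤ r) :
    0 < 1 - (g r) ^ 2 := by
  -- Precomposing with `max · 0` makes the integrand continuous on the whole line.
  have hc : Continuous fun t : ℝ => 2 * (f (max t 0) * g (max t 0)) := by
    have hm : Continuous fun t : ℝ => max t 0 := by fun_prop
    have h1 : Continuous fun t : ℝ => f (max t 0) :=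
      hfc.comp_continuous hm fun t => le_max_right t 0
    have h2 : Continuous fun t : ℝ => g (max t 0) :=
      hgc.comp_continuous hm fun t => le_max_right t 0
    exact continuous_const.mul (h1.mul h2)
  set P : ℝ → ℝ := fun x => ∫ t in (0 : ℝ)..x, 2 * (f (max t 0) * g (max t 0)) with hP
  have hPd : ∀ x, HasDerivAt P (2 * (f (max x 0) * g (max x 0))) x := fun x =>
    intervalIntegral.integral_hasDerivAt_right (hc.intervalIntegrable _ _)
      (hc.stronglyMeasurableAtFilter _ _) hc.continuousAt
  have hPc : Continuous P := continuous_iff_continuousAt.2 fun x => (hPd x).continuousAt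
  have hanti : AntitoneOn (fun x => (1 - (g x) ^ 2) * Real.exp (P x)) (Set.Ici 0) := by
    refine antitoneOn_Ici_of_hasDerivAt_nonpos (F' := fun _ => 0)
      ((continuousOn_const.sub (hgc.pow 2)).mul (Real.continuous_exp.comp hPc).continuousOn)
      (fun x hx => ?_) fun _ _ => le_rfl
    have h := (((hg x hx).pow 2).const_sub 1).mul (hPd x).exp
    rw [max_eq_left hx.le] at h
    refine h.congr_deriv ?_
    simp only [Pi.pow_apply]
    push_cast
    ring
  have hev : ∀ᶠ x in Filter.atTop, 0 < 1 - (g x) ^ 2 := by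
    have h : Filter.Tendsto (fun x => 1 - (g x) ^ 2) Filter.atTop (nhds (1 - 0 ^ 2)) :=
      (hlim.pow 2).const_sub 1
    exact h.eventually (lt_mem_nhds (by norm_num))
  obtain ⟨R, hR, hrR⟩ := (hev.and (Filter.eventually_ge_atTop r)).exists
  have h := hanti (Set.mem_Ici.2 hr) (Set.mem_Ici.2 (hr.trans hrR)) hrR
  exact pos_of_mul_pos_left ((mul_pos hR (Real.exp_pos _)).trans_le h) (Real.exp_pos _).le

/-- For `a, b > 0` with `a - 2b ≤ 0`, any `C¹` solution `(f, g)` on `[0, ∞)`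
of the radial system with `f 0 = 0` and `(f r, g r) → (0, 0)` as `r → ∞` has `g 0 = 0`,
and hence is identically zero. -/
theorem radial_system_no_solution_of_a_le_two_b
    (a b : ℝ) (ha : 0 < a) (hb : 0 < b) (hab : a - 2 * b ≤ 0)
    (f g : ℝ → ℝ)
    (hfc : ContinuousOn f (Set.Ici 0)) (hgc : ContinuousOn g (Set.Ici 0))
    (hode : ∀ r : ℝ, 0 < r →
      HasDerivAt f (g r * ((f r) ^ 2 - a * (g r) ^ 2 + b) - 2 / r * f r) r ∧
      HasDerivAt g (f r * (1 - (g r) ^ 2)) r)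
    (hf0 : f 0 = 0)
    (hlim : Filter.Tendsto (fun r => (f r, g r)) Filter.atTop (nhds ((0 : ℝ), (0 : ℝ)))) :
    g 0 = 0 ∧ ∀ r : ℝ, 0 ≤ r → f r = 0 ∧ g r = 0 := by
  have hfl : Filter.Tendsto f Filter.atTop (nhds 0) := hlim.fst_nhds
  have hgl : Filter.Tendsto g Filter.atTop (nhds 0) := hlim.snd_nhds
  have hpos : ∀ r, 0 ≤ r → 0 < 1 - (g r) ^ 2 := fun r hr =>
    radial_one_sub_sq_pos hfc hgc (fun x hx => (hode x hx).2) hgl hr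
  have hneg : ∀ r, 0 ≤ r → a * (g r) ^ 2 - 2 * b < 0 := fun r hr => by
    nlinarith [mul_pos ha (hpos r hr)]
  set H : ℝ → ℝ := fun r =>
    f r ^ 2 * (1 - g r ^ 2) / 2 + g r ^ 2 * (a * g r ^ 2 - 2 * b) / 4 with hH
  have hHd : ∀ r, 0 < r → HasDerivAt H (-(2 / r * (f r ^ 2 * (1 - g r ^ 2)))) r := by
    intro r hr
    obtain ⟨hf, hg⟩ := hode r hr
    have h := (((hf.pow 2).mul ((hg.pow 2).const_sub 1)).div_const 2).add
      (((hg.pow 2).mul (((hg.pow 2).const_mul a).sub_const (2 * b))).div_const 4)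
    refine h.congr_deriv ?_
    simp only [Pi.pow_apply]
    push_cast
    ring
  have hHc : ContinuousOn H (Set.Ici 0) := by
    simp only [hH]
    fun_prop
  have hanti : AntitoneOn H (Set.Ici 0) :=
    antitoneOn_Ici_of_hasDerivAt_nonpos hHc hHd fun r hr => by
      have := mul_nonneg (div_nonneg two_pos.le hr.le)
        (mul_nonneg (sq_nonneg (f r)) (hpos r hr.le).le)
      linarith
  have hHl : Filter.Tendsto H Filter.atTop (nhds 0) := by
    have h := (((hfl.pow 2).mul ((hgl.pow 2).const_sub 1)).div_const 2).add
      (((hgl.pow 2).mul (((hgl.pow 2).const_mul a).sub_const (2 * b))).div_const 4)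
    simpa using h
  have hHnn : ∀ r, 0 ≤ r → 0 ≤ H r := fun r hr =>
    le_of_tendsto hHl ((Filter.eventually_ge_atTop r).mono fun x hx =>
      hanti (Set.mem_Ici.2 hr) (Set.mem_Ici.2 (hr.trans hx)) hx)
  have hg_zero : ∀ r, 0 ≤ r → f r = 0 → g r = 0 := by
    intro r hr hfr
    have h := hHnn r hr
    simp only [hH, hfr] at h
    by_contra hne
    have hsq : 0 < g r ^ 2 := by positivity
    nlinarith [mul_neg_of_pos_of_neg hsq (hneg r hr)]
  have hg0 : g 0 = 0 := hg_zero 0 le_rfl hf0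
  have hH0 : H 0 = 0 := by simp [hH, hf0, hg0]
  have hHz : ∀ r, 0 ≤ r → H r = 0 := fun r hr =>
    le_antisymm (hH0 ▸ hanti (Set.mem_Ici.2 le_rfl) (Set.mem_Ici.2 hr) hr) (hHnn r hr)
  refine ⟨hg0, fun r hr => ?_⟩
  have hfr : f r = 0 := by
    rcases hr.eq_or_lt with rfl | hr'
    · exact hf0
    have hev : H =ᶠ[nhds r] fun _ => 0 :=
      (lt_mem_nhds hr').mono fun x hx => hHz x (le_of_lt hx)
    have h0 := (hHd r hr').unique ((hasDerivAt_const r (0 : ℝ)).congr_of_eventuallyEq hev)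
    simpa [hr'.ne', (hpos r hr).ne'] using h0
  exact ⟨hfr, hg_zero r hr hfr⟩
end

section
/- Let a, b > 0 with a - b > 0. Define f(r) = 1/r - √(a-b) · coth(√(a-b) · r) for r > 0 and f(0) = 0, and g(r) = 1 for all r ≥ 0. Then (f, g) is a continuous pair on [0,∞), C^1 on (0,∞), solving the radial system f'(r) + (2/r) f(r) = g(r)(f(r)^2 - a g(r)^2 + b), g'(r) = f(r)(1 - g(r)^2) for all r > 0, with f(0) = 0 and g(0) = 1; moreover f extends continuously to 0 with value 0. -/
/-! Write `k = √(a - b)`. The equation for `g` is trivial, and the one for `f` is a direct computation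
from `(coth x)' = -1 / sinh² x` and `coth² x - 1 = 1 / sinh² x`. For the behaviour at `0`, the Langevin
function `coth x - 1 / x` lies between `0` and `x` for `x > 0`, so `-k² r ≤ f r ≤ 0` and `f r → 0`
as `r ↓ 0`. -/

theorem sinh_le_mul_cosh {x : ℝ} (hx : 0 ≤ x) : Real.sinh x ≤ x * Real.cosh x := by
  have hd : ∀ y : ℝ, HasDerivAt (fun y => y * Real.cosh y - Real.sinh y) (y * Real.sinh y) y := by
    intro y
    refine (((hasDerivAt_id' y).fun_mul (Real.hasDerivAt_cosh y)).fun_sub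
      (Real.hasDerivAt_sinh y)).congr_deriv ?_
    ring
  have hm : MonotoneOn (fun y => y * Real.cosh y - Real.sinh y) (Set.Ici 0) := by
    refine monotoneOn_of_deriv_nonneg (convex_Ici 0)
      (fun y _ => (hd y).continuousAt.continuousWithinAt)
      (fun y _ => (hd y).differentiableAt.differentiableWithinAt) fun y hy => ?_
    rw [interior_Ici] at hy
    rw [(hd y).deriv]
    exact mul_nonneg hy.le (Real.sinh_nonneg_iff.2 hy.le)
  have h := hm (Set.mem_Ici.2 le_rfl) (Set.mem_Ici.2 hx) hx
  simp at h
  linarith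

theorem cosh_sub_one_le_mul_sinh {x : ℝ} (hx : 0 ≤ x) : Real.cosh x - 1 ≤ x * Real.sinh x := by
  -- With `y = x / 2` this reads `2 sinh² y ≤ 4 y sinh y cosh y`.
  obtain ⟨y, rfl⟩ : ∃ y, x = 2 * y := ⟨x / 2, by ring⟩
  have hy : 0 ≤ y := by linarith
  have hs := Real.sinh_nonneg_iff.2 hy
  have h1 := mul_le_mul_of_nonneg_left (sinh_le_mul_cosh hy) hs
  have h2 : 0 ≤ Real.sinh y * (y * Real.cosh y) :=
    mul_nonneg hs (mul_nonneg hy (Real.cosh_pos y).le)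
  rw [Real.cosh_two_mul, Real.sinh_two_mul]
  nlinarith [Real.cosh_sq y]

/-- Two-sided bound for the (rescaled, negated) Langevin function. -/
theorem inv_sub_coth_bounds {k r : ℝ} (hk : 0 < k) (hr : 0 < r) :
    -(k ^ 2 * r) ≤ 1 / r - k * (Real.cosh (k * r) / Real.sinh (k * r)) ∧
      1 / r - k * (Real.cosh (k * r) / Real.sinh (k * r)) ≤ 0 := by
  have hx : 0 < k * r := mul_pos hk hr
  have hs : 0 < Real.sinh (k * r) := Real.sinh_pos_iff.2 hx
  have e : 1 / r - k * (Real.cosh (k * r) / Real.sinh (k * r)) =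
      (Real.sinh (k * r) - k * r * Real.cosh (k * r)) / (r * Real.sinh (k * r)) := by
    field_simp
  rw [e]
  constructor
  · rw [le_div_iff₀ (mul_pos hr hs)]
    -- `x cosh x - sinh x ≤ x (cosh x - 1) ≤ x² sinh x` with `x = k r`.
    have h1 : k * r ≤ Real.sinh (k * r) := Real.self_le_sinh_iff.2 hx.le
    have h2 := mul_le_mul_of_nonneg_left (cosh_sub_one_le_mul_sinh hx.le) hx.le
    linarith
  · exact div_nonpos_of_nonpos_of_nonneg (by linarith [sinh_le_mul_cosh hx.le])
      (mul_pos hr hs).le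

theorem hasDerivAt_inv_sub_coth {k r : ℝ} (hk : 0 < k) (hr : 0 < r) :
    HasDerivAt (fun r => 1 / r - k * (Real.cosh (k * r) / Real.sinh (k * r)))
      ((1 / r - k * (Real.cosh (k * r) / Real.sinh (k * r))) ^ 2 - k ^ 2
        - 2 / r * (1 / r - k * (Real.cosh (k * r) / Real.sinh (k * r)))) r := by
  have hs : Real.sinh (k * r) ≠ 0 := (Real.sinh_pos_iff.2 (mul_pos hk hr)).ne'
  have hl : HasDerivAt (fun r : ℝ => k * r) k r := by
    simpa using (hasDerivAt_id r).const_mul k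
  have h := ((hasDerivAt_const r (1 : ℝ)).fun_div (hasDerivAt_id' r) hr.ne').fun_sub
    ((hl.cosh.fun_div hl.sinh hs).const_mul k)
  refine h.congr_deriv ?_
  field_simp
  ring

/-- For `a, b > 0` with `a - b > 0`, the pair given by
`f r = 1/r - √(a-b) coth (√(a-b) r)` for `r > 0`, `f 0 = 0`, and `g ≡ 1`
is continuous on `[0, ∞)`, solves the radial system on `(0, ∞)` (hence is `C¹` there),
satisfies `f 0 = 0`, `g 0 = 1`, and `f` extends continuously to `0` with value `0`. -/
theorem radial_system_explicit_solution_g_eq_one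
    (a b : ℝ) (ha : 0 < a) (hb : 0 < b) (hab : 0 < a - b)
    (f g : ℝ → ℝ)
    (hf : ∀ r : ℝ, 0 < r →
      f r = 1 / r - Real.sqrt (a - b) *
        (Real.cosh (Real.sqrt (a - b) * r) / Real.sinh (Real.sqrt (a - b) * r)))
    (hf0 : f 0 = 0)
    (hg : ∀ r : ℝ, g r = 1) :
    ContinuousOn f (Set.Ici 0) ∧ ContinuousOn g (Set.Ici 0) ∧
    (∀ r : ℝ, 0 < r →
      HasDerivAt f (g r * ((f r) ^ 2 - a * (g r) ^ 2 + b) - 2 / r * f r) r ∧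
      HasDerivAt g (f r * (1 - (g r) ^ 2)) r) ∧
    f 0 = 0 ∧ g 0 = 1 ∧
    Filter.Tendsto f (nhdsWithin 0 (Set.Ioi 0)) (nhds 0) := by
  have hk : 0 < Real.sqrt (a - b) := Real.sqrt_pos.2 hab
  have hk2 : Real.sqrt (a - b) ^ 2 = a - b := Real.sq_sqrt hab.le
  have hD : ∀ r : ℝ, 0 < r →
      HasDerivAt f (g r * ((f r) ^ 2 - a * (g r) ^ 2 + b) - 2 / r * f r) r := by
    intro r hr
    have h := (hasDerivAt_inv_sub_coth hk hr).congr_of_eventuallyEq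
      (f₁ := f) (by filter_upwards [Ioi_mem_nhds hr] with x hx using hf x hx)
    rw [← hf r hr, hk2] at h
    refine h.congr_deriv ?_
    rw [hg]
    ring
  have hT : Filter.Tendsto f (nhdsWithin 0 (Set.Ioi 0)) (nhds 0) := by
    have hlow : Filter.Tendsto (fun r : ℝ => -(Real.sqrt (a - b) ^ 2 * r))
        (nhdsWithin 0 (Set.Ioi 0)) (nhds 0) := by
      have hc : Continuous fun r : ℝ => -(Real.sqrt (a - b) ^ 2 * r) := by fun_prop
      simpa using (hc.tendsto 0).mono_left nhdsWithin_le_nhds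
    refine tendsto_of_tendsto_of_tendsto_of_le_of_le' hlow tendsto_const_nhds ?_ ?_ <;>
      filter_upwards [self_mem_nhdsWithin] with r hr <;> rw [hf r hr]
    exacts [(inv_sub_coth_bounds hk hr).1, (inv_sub_coth_bounds hk hr).2]
  have hg1 : g = fun _ => 1 := funext hg
  refine ⟨?_, ?_, fun r hr => ⟨hD r hr, ?_⟩, hf0, hg 0, hT⟩
  · intro r hr
    rcases (Set.mem_Ici.1 hr).eq_or_lt with rfl | hr
    · rw [← continuousWithinAt_Ioi_iff_Ici, ContinuousWithinAt, hf0]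
      exact hT
    · exact (hD r hr).continuousAt.continuousWithinAt
  · rw [hg1]
    exact continuousOn_const
  · rw [hg1]
    simpa using hasDerivAt_const r (1 : ℝ)
end

section
/- Let a, b > 0, let x ∈ ℝ, and let (f_x, g_x) be the solution of the radial system on its maximal interval [0, R_x) with f_x(0) = 0 and g_x(0) = x. Then for all r ∈ (0, R_x), the function r ↦ H(f_x(r), g_x(r)) is differentiable and its derivative equals -(2/r) f_x(r)^2 (1 - g_x(r)^2), where H(f,g) = (1/2) f^2 (1 - g^2) + (a/4) g^4 - (b/2) g^2. -/
/-- Along any solution `(f, g)` of the radial system on `[0, R)` with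
`f 0 = 0`, `g 0 = x`, the energy `H (f r, g r)` is differentiable on `(0, R)` with
derivative `-(2/r) f r ² (1 - g r ²)`, where
`H (f, g) = (1/2) f² (1 - g²) + (a/4) g⁴ - (b/2) g²`. -/
theorem energy_derivative_along_radial_solution
    (a b : ℝ) (ha : 0 < a) (hb : 0 < b) (x : ℝ)
    (R : EReal) (hR : 0 < R) (f g : ℝ → ℝ)
    (hf0 : f 0 = 0) (hg0 : g 0 = x)
    (hode : ∀ r : ℝ, 0 < r → (r : EReal) < R →
      HasDerivAt f (g r * ((f r) ^ 2 - a * (g r) ^ 2 + b) - 2 / r * f r) r ∧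
      HasDerivAt g (f r * (1 - (g r) ^ 2)) r) :
    ∀ r : ℝ, 0 < r → (r : EReal) < R →
      HasDerivAt
        (fun t => (1 / 2) * (f t) ^ 2 * (1 - (g t) ^ 2) +
          (a / 4) * (g t) ^ 4 - (b / 2) * (g t) ^ 2)
        (-(2 / r) * (f r) ^ 2 * (1 - (g r) ^ 2)) r := by
  intro r hr hrR
  obtain ⟨hf, hg⟩ := hode r hr hrR
  have h := ((((hf.pow 2).const_mul (1 / 2)).mul ((hg.pow 2).const_sub 1)).add
    ((hg.pow 4).const_mul (a / 4))).sub ((hg.pow 2).const_mul (b / 2))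
  refine h.congr_deriv ?_
  -- By the chain rule the derivative is `f (1 - g²)` times
  -- `(g (f² - a g² + b) - (2/r) f) - g (f² - a g² + b)`, so only the damping term survives.
  simp only [Pi.pow_apply]
  ring
end

section
/- Let a, b > 0 with a - 2b < 0, let x ≠ 0, and let (f_x, g_x) be the solution of the radial system on its maximal interval [0, R_x) with f_x(0) = 0 and g_x(0) = x. Then it is not the case that R_x = +∞ and (f_x(r), g_x(r)) → (0,0) as r → +∞. -/
/-!
Without the friction term `2 / r * f`, the system is Hamiltonian with
`H = f² (1 - g²) / 2 + a g⁴ / 4 - b g² / 2`; along solutions of the full system,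
`H' = -(2 / r) f² (1 - g²)`. Since `1 - g²` solves the linear equation `h' = -2 f g h`, it keeps
the sign of `1 - x²` (`exists_one_sub_sq_mul_exp`). If `1 ≤ x²`, then `1 ≤ g²` throughout, so `g`
cannot tend to `0`. If `x² < 1`, then `H` is nonincreasing, and its initial value
`x² (a x² - 2 b) / 4` is negative because `a < 2 b`, so `H` cannot tend to `H(0, 0) = 0`.
-/

/-- Integrating factor for `(1 - g²)' = -2 f g (1 - g²)`: up to a positive factor, `1 - g²` keeps
its initial value. -/
lemma exists_one_sub_sq_mul_exp (f g : ℝ → ℝ)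
    (hfc : ContinuousOn f (Set.Ici 0)) (hgc : ContinuousOn g (Set.Ici 0))
    (hg : ∀ r : ℝ, 0 < r → HasDerivAt g (f r * (1 - (g r) ^ 2)) r) :
    ∃ F : ℝ → ℝ, ∀ r : ℝ, 0 ≤ r → (1 - (g r) ^ 2) * Real.exp (F r) = 1 - (g 0) ^ 2 := by
  -- Extending by constants to negative times makes the integrand continuous on all of `ℝ`.
  have hmax : ∀ u : ℝ → ℝ, ContinuousOn u (Set.Ici 0) → Continuous fun t => u (max t 0) :=
    fun u hu => hu.comp_continuous (by fun_prop) (fun t => le_max_right t 0)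
  have hk : Continuous fun t => 2 * (f (max t 0) * g (max t 0)) :=
    continuous_const.mul ((hmax f hfc).mul (hmax g hgc))
  obtain ⟨F, hFdef⟩ : ∃ F : ℝ → ℝ, F = fun r => ∫ t in (0 : ℝ)..r,
    2 * (f (max t 0) * g (max t 0)) := ⟨_, rfl⟩
  have hF : ∀ r, HasDerivAt F (2 * (f (max r 0) * g (max r 0))) r := fun r => by
    rw [hFdef]
    exact intervalIntegral.integral_hasDerivAt_right (hk.intervalIntegrable _ _)
      (hk.stronglyMeasurableAtFilter _ _) hk.continuousAt
  have hF0 : F 0 = 0 := by simp [hFdef]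
  have hFc : Continuous F := continuous_iff_continuousAt.2 fun r => (hF r).continuousAt
  refine ⟨F, fun r hr => ?_⟩
  have hcont : ContinuousOn (fun t => (1 - (g t) ^ 2) * Real.exp (F t)) (Set.Icc 0 r) := by
    have hg' : ContinuousOn g (Set.Icc 0 r) := hgc.mono Set.Icc_subset_Ici_self
    exact (continuousOn_const.sub (hg'.pow 2)).mul (Real.continuous_exp.comp hFc).continuousOn
  have hder : ∀ t, 0 < t → HasDerivAt (fun t => (1 - (g t) ^ 2) * Real.exp (F t)) 0 t := by
    intro t ht
    have h1 := (((hg t ht).pow 2).const_sub 1).mul (hF t).exp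
    rw [max_eq_left ht.le] at h1
    refine h1.congr_deriv ?_
    simp only [Pi.pow_apply]
    push_cast
    ring
  rcases hr.eq_or_lt with h0 | hpos
  · simp [← h0, hF0]
  · obtain ⟨c, hc, hslope⟩ := exists_hasDerivAt_eq_slope _ (fun _ => 0) hpos hcont
      (fun t ht => hder t ht.1)
    have := (div_eq_zero_iff.1 hslope.symm).resolve_right (by linarith)
    simp only [hF0, Real.exp_zero, mul_one] at this
    linarith

/-- For `a, b > 0` with `a - 2b < 0` and `x ≠ 0`, no solution of the radial
system with `f 0 = 0`, `g 0 = x` can be globally defined on `[0, ∞)` and converge to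
`(0, 0)` at infinity. -/
theorem radial_system_no_decaying_solution_a_lt_two_b
    (a b : ℝ) (ha : 0 < a) (hb : 0 < b) (hab : a - 2 * b < 0)
    (x : ℝ) (hx : x ≠ 0) (f g : ℝ → ℝ)
    (hfc : ContinuousOn f (Set.Ici 0)) (hgc : ContinuousOn g (Set.Ici 0))
    (hf0 : f 0 = 0) (hg0 : g 0 = x)
    (hode : ∀ r : ℝ, 0 < r →
      HasDerivAt f (g r * ((f r) ^ 2 - a * (g r) ^ 2 + b) - 2 / r * f r) r ∧
      HasDerivAt g (f r * (1 - (g r) ^ 2)) r) :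
    ¬ Filter.Tendsto (fun r => (f r, g r)) Filter.atTop (nhds ((0 : ℝ), (0 : ℝ))) := by
  intro hlim
  have hflim : Filter.Tendsto f Filter.atTop (nhds 0) := hlim.fst_nhds
  have hglim : Filter.Tendsto g Filter.atTop (nhds 0) := hlim.snd_nhds
  obtain ⟨F, hF⟩ := exists_one_sub_sq_mul_exp f g hfc hgc fun r hr => (hode r hr).2
  rw [hg0] at hF
  rcases le_or_gt 1 (x ^ 2) with hx1 | hx1
  · have hge : ∀ r : ℝ, 0 ≤ r → 1 ≤ (g r) ^ 2 := fun r hr => by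
      by_contra! h
      have := mul_pos (sub_pos.2 h) (Real.exp_pos (F r))
      linarith [hF r hr]
    have := ge_of_tendsto (hglim.pow 2) (Filter.eventually_atTop.2 ⟨0, hge⟩)
    norm_num at this
  · have hpos : ∀ r : ℝ, 0 ≤ r → 0 < 1 - (g r) ^ 2 := fun r hr =>
      pos_of_mul_pos_left (by linarith [hF r hr]) (Real.exp_pos (F r)).le
    obtain ⟨H, hH⟩ : ∃ H : ℝ → ℝ, H = fun r => (f r) ^ 2 * (1 - (g r) ^ 2) / 2
      + a * (g r) ^ 4 / 4 - b * (g r) ^ 2 / 2 := ⟨_, rfl⟩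
    have hHd : ∀ r, 0 < r → HasDerivAt H (-(2 / r * ((f r) ^ 2 * (1 - (g r) ^ 2)))) r := by
      intro r hr
      obtain ⟨h1, h2⟩ := hode r hr
      have h3 := ((((h1.pow 2).mul ((h2.pow 2).const_sub 1)).div_const 2).add
        (((h2.pow 4).const_mul a).div_const 4)).sub (((h2.pow 2).const_mul b).div_const 2)
      rw [hH]
      refine h3.congr_deriv ?_
      simp only [Pi.pow_apply]
      push_cast
      ring
    have hanti : AntitoneOn H (Set.Ici 0) := by
      refine antitoneOn_of_deriv_nonpos (convex_Ici 0) ?_ ?_ ?_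
      · rw [hH]
        fun_prop
      · rw [interior_Ici]
        exact fun r hr => (hHd r hr).differentiableAt.differentiableWithinAt
      · rw [interior_Ici]
        intro r hr
        have hr' : 0 < r := hr
        rw [(hHd r hr').deriv]
        have := hpos r hr'.le
        have : 0 ≤ 2 / r * ((f r) ^ 2 * (1 - (g r) ^ 2)) := by positivity
        linarith
    have hH0 : H 0 < 0 := by
      have hx2 : 0 < x ^ 2 := by positivity
      have : a * x ^ 2 < 2 * b := by nlinarith
      rw [hH]
      simp only [hf0, hg0]
      nlinarith
    have hHlim : Filter.Tendsto H Filter.atTop (nhds 0) := by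
      have h := ((((hflim.pow 2).mul ((hglim.pow 2).const_sub 1)).div_const 2).add
        (((hglim.pow 4).const_mul a).div_const 4)).sub (((hglim.pow 2).const_mul b).div_const 2)
      rw [hH]
      simpa using h
    have := le_of_tendsto hHlim (Filter.eventually_atTop.2
      ⟨0, fun r hr => hanti Set.self_mem_Ici hr hr⟩)
    linarith
end

section
/- Let a, b > 0 with a - b > 0, let x ∈ ℝ with x^2 > 1, and let (f_x, g_x) be the solution of the radial system on its maximal interval [0, R_x) with f_x(0) = 0 and g_x(0) = x. Then g_x(r)^2 > 1 for all r ∈ [0, R_x). -/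
/-!
Along a solution, `u = g ^ 2 - 1` satisfies the linear equation `u' = -2 f g u`, whose coefficient
is bounded on every compact interval `[0, T]`, also at the singular endpoint `0`, because `f` and
`g` are continuous there. If `f g ≤ K` on `[0, T]`, then `u ^ 2 * exp (4 K t)` is nondecreasing, so
it stays at least `u 0 ^ 2 > 0`. Thus `u` has no zero, and by the intermediate value theorem it
keeps its positive initial sign.
-/

/-- For `a, b > 0` with `a - b > 0` and `x² > 1`, the solution of the radial
system on `[0, R)` with `f 0 = 0`, `g 0 = x` satisfies `g r ² > 1` for all `r ∈ [0, R)`. -/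
theorem radial_system_g_sq_stays_above_one
    (a b : ℝ) (ha : 0 < a) (hb : 0 < b) (hab : 0 < a - b)
    (x : ℝ) (hx : 1 < x ^ 2)
    (R : EReal) (hR : 0 < R) (f g : ℝ → ℝ)
    (hfc : ContinuousOn f {r : ℝ | 0 ≤ r ∧ (r : EReal) < R})
    (hgc : ContinuousOn g {r : ℝ | 0 ≤ r ∧ (r : EReal) < R})
    (hf0 : f 0 = 0) (hg0 : g 0 = x)
    (hode : ∀ r : ℝ, 0 < r → (r : EReal) < R →
      HasDerivAt f (g r * ((f r) ^ 2 - a * (g r) ^ 2 + b) - 2 / r * f r) r ∧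
      HasDerivAt g (f r * (1 - (g r) ^ 2)) r) :
    ∀ r : ℝ, 0 ≤ r → (r : EReal) < R → 1 < (g r) ^ 2 := by
  intro T hT hTR
  have hsub : Set.Icc 0 T ⊆ {r : ℝ | 0 ≤ r ∧ (r : EReal) < R} := fun t ht =>
    ⟨ht.1, lt_of_le_of_lt (EReal.coe_le_coe_iff.2 ht.2) hTR⟩
  have hfT := hfc.mono hsub
  have hgT := hgc.mono hsub
  have hu : ContinuousOn (fun t => g t ^ 2 - 1) (Set.Icc 0 T) :=
    (hgT.pow 2).sub continuousOn_const
  obtain ⟨K, hK⟩ := isCompact_Icc.exists_bound_of_continuousOn (hgT.mul hfT)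
  -- Since `u := g ^ 2 - 1` solves `u' = -2 f g u`, the derivative of `u ^ 2 * exp (4 K t)`
  -- is `4 (K - f g) u ^ 2 exp (4 K t) ≥ 0`.
  have hmono : MonotoneOn (fun t => (g t ^ 2 - 1) ^ 2 * Real.exp (4 * K * t)) (Set.Icc 0 T) := by
    have hexp : Continuous fun t : ℝ => Real.exp (4 * K * t) := by fun_prop
    refine monotoneOn_of_hasDerivWithinAt_nonneg (convex_Icc 0 T)
      (f' := fun t => 4 * (K - g t * f t) * ((g t ^ 2 - 1) ^ 2 * Real.exp (4 * K * t)))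
      ((hu.pow 2).mul hexp.continuousOn) ?_ ?_
    · intro t ht
      rw [interior_Icc] at ht
      have hg' := (hode t ht.1 (hsub ⟨ht.1.le, ht.2.le⟩).2).2
      have hexp' : HasDerivAt (fun t : ℝ => Real.exp (4 * K * t))
          (Real.exp (4 * K * t) * (4 * K)) t := by
        simpa using ((hasDerivAt_id t).const_mul (4 * K)).exp
      refine HasDerivAt.hasDerivWithinAt ?_
      refine ((((hg'.pow 2).sub_const 1).pow 2).mul hexp').congr_deriv ?_
      simp only [Pi.pow_apply]
      push_cast
      ring
    · intro t ht
      rw [interior_Icc] at ht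
      have hKt : g t * f t ≤ K := (le_abs_self _).trans (hK t ⟨ht.1.le, ht.2.le⟩)
      have hKt' := sub_nonneg.2 hKt
      positivity
  by_contra! hle
  -- Otherwise `u` vanishes somewhere, contradicting the monotonicity.
  obtain ⟨t, ht, hzero⟩ := intermediate_value_Icc' hT hu
    (show (0 : ℝ) ∈ Set.Icc _ _ from ⟨by linarith, by rw [hg0]; linarith⟩)
  have hcmp := hmono ⟨le_rfl, hT⟩ ht ht.1
  simp only [hg0, mul_zero, Real.exp_zero, mul_one] at hcmp hzero
  rw [hzero] at hcmp
  nlinarith [pow_pos (sub_pos.2 hx) 2]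
end

section
/- Let a, b > 0 with a = 2b, let x ≠ 0, and let (f_x, g_x) be the solution of the radial system on its maximal interval [0, R_x) with f_x(0) = 0 and g_x(0) = x. Then it is not the case that R_x = +∞ and (f_x(r), g_x(r)) → (0,0) as r → +∞. -/
/-!
The system has the Hamiltonian `f² (1 - g²) / 2 + a g⁴ / 4 - b g² / 2`, dissipated by the friction
term `2 f / r`. When `a = 2 b`, twice this Hamiltonian factors as `H = (1 - g²) (f² - b g²)`, and
`H' = -(4 / r) f² (1 - g²)`.

The factor `1 - g²` solves the linear equation `u' = -2 f g u`, so it is a positive multiple of its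
initial value `1 - x²`. If `g → 0` then `1 - g² → 1`, hence `1 - x² > 0` and `1 - g² > 0` throughout.
Therefore `H` is nonincreasing, with `H 0 = -(1 - x²) b x² < 0`, and it cannot tend to `0`, as it
would if `(f, g) → (0, 0)`.
-/

/-- The sign of `1 - g²` is preserved: multiplied by the integrating factor `exp (∫ 2 f g)`, it is
constant. -/
lemma one_sub_sq_eq_mul_exp (f g : ℝ → ℝ)
    (hfc : ContinuousOn f (Set.Ici 0)) (hgc : ContinuousOn g (Set.Ici 0))
    (hg : ∀ r : ℝ, 0 < r → HasDerivAt g (f r * (1 - (g r) ^ 2)) r) :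
    ∃ F : ℝ → ℝ, ∀ r, 0 ≤ r → 1 - g r ^ 2 = (1 - g 0 ^ 2) * Real.exp (F r) := by
  -- Freezing the integrand at its value at `0` on the negative axis makes it continuous on `ℝ`.
  set φ : ℝ → ℝ := fun r => 2 * f (max r 0) * g (max r 0) with hφ
  have hmax : Continuous fun r : ℝ => max r 0 := by fun_prop
  have hφc : Continuous φ :=
    (continuous_const.mul (hfc.comp_continuous hmax fun r => le_max_right r 0)).mul
      (hgc.comp_continuous hmax fun r => le_max_right r 0)
  set F : ℝ → ℝ := fun r => ∫ t in (0 : ℝ)..r, φ t with hF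
  have hFd : ∀ r, HasDerivAt F (φ r) r := fun r =>
    intervalIntegral.integral_hasDerivAt_right (hφc.intervalIntegrable _ _)
      hφc.stronglyMeasurable.stronglyMeasurableAtFilter hφc.continuousAt
  have hFc : Continuous F := continuous_iff_continuousAt.2 fun r => (hFd r).continuousAt
  have hF0 : F 0 = 0 := by simp [hF]
  refine ⟨fun r => -F r, fun r hr => ?_⟩
  -- The derivative is only known on the open half-line, so constancy comes from monotonicity
  -- in both directions.
  have hc : ContinuousOn (fun s => (1 - g s ^ 2) * Real.exp (F s)) (Set.Ici 0) :=
    (continuousOn_const.sub (hgc.pow 2)).mul (Real.continuous_exp.comp hFc).continuousOn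
  have hd : ∀ s ∈ interior (Set.Ici (0 : ℝ)),
      HasDerivWithinAt (fun s => (1 - g s ^ 2) * Real.exp (F s)) 0 (interior (Set.Ici 0)) s := by
    intro s hs
    rw [interior_Ici] at hs
    have hs' : 0 < s := hs
    have h := ((((hg s hs').pow 2).const_sub 1).mul (hFd s).exp)
    refine (h.congr_deriv ?_).hasDerivWithinAt
    simp only [hφ, max_eq_left hs'.le, Pi.pow_apply]
    push_cast
    ring
  have h1 := antitoneOn_of_hasDerivWithinAt_nonpos (convex_Ici 0) hc hd (fun _ _ => le_rfl)
    Set.self_mem_Ici (Set.mem_Ici.2 hr) hr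
  have h2 := monotoneOn_of_hasDerivWithinAt_nonneg (convex_Ici 0) hc hd (fun _ _ => le_rfl)
    Set.self_mem_Ici (Set.mem_Ici.2 hr) hr
  have h3 := le_antisymm h1 h2
  simp only [hF0, Real.exp_zero, mul_one] at h3
  rw [← h3, mul_assoc, ← Real.exp_add, add_neg_cancel, Real.exp_zero, mul_one]

/-- For `a, b > 0` with `a = 2b` and `x ≠ 0`, no solution of the radial
system with `f 0 = 0`, `g 0 = x` can be globally defined on `[0, ∞)` and converge to
`(0, 0)` at infinity. -/
theorem radial_system_no_decaying_solution_a_eq_two_b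
    (a b : ℝ) (ha : 0 < a) (hb : 0 < b) (hab : a = 2 * b)
    (x : ℝ) (hx : x ≠ 0) (f g : ℝ → ℝ)
    (hfc : ContinuousOn f (Set.Ici 0)) (hgc : ContinuousOn g (Set.Ici 0))
    (hf0 : f 0 = 0) (hg0 : g 0 = x)
    (hode : ∀ r : ℝ, 0 < r →
      HasDerivAt f (g r * ((f r) ^ 2 - a * (g r) ^ 2 + b) - 2 / r * f r) r ∧
      HasDerivAt g (f r * (1 - (g r) ^ 2)) r) :
    ¬ Filter.Tendsto (fun r => (f r, g r)) Filter.atTop (nhds ((0 : ℝ), (0 : ℝ))) := by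
  intro hlim
  have hfl : Filter.Tendsto f Filter.atTop (nhds 0) := hlim.fst_nhds
  have hgl : Filter.Tendsto g Filter.atTop (nhds 0) := hlim.snd_nhds
  obtain ⟨F, hF⟩ := one_sub_sq_eq_mul_exp f g hfc hgc fun r hr => (hode r hr).2
  rw [hg0] at hF
  have hx1 : 0 < 1 - x ^ 2 := by
    have hu : Filter.Tendsto (fun r => 1 - g r ^ 2) Filter.atTop (nhds (1 - 0 ^ 2)) :=
      (hgl.pow 2).const_sub 1
    have hev := hu.eventually (lt_mem_nhds (show (0 : ℝ) < 1 - 0 ^ 2 by norm_num))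
    obtain ⟨r, hr, hr0⟩ := (hev.and (Filter.eventually_ge_atTop 0)).exists
    rw [hF r hr0] at hr
    exact pos_of_mul_pos_left hr (Real.exp_pos _).le
  have hpos : ∀ r, 0 ≤ r → 0 < 1 - g r ^ 2 := fun r hr => by
    rw [hF r hr]
    exact mul_pos hx1 (Real.exp_pos _)
  have hanti : AntitoneOn (fun r => (1 - g r ^ 2) * (f r ^ 2 - b * g r ^ 2)) (Set.Ici 0) := by
    refine antitoneOn_of_hasDerivWithinAt_nonpos
      (f' := fun r => -(4 / r * (f r ^ 2 * (1 - g r ^ 2)))) (convex_Ici 0) ?_ ?_ ?_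
    · exact (continuousOn_const.sub (hgc.pow 2)).mul
        ((hfc.pow 2).sub (continuousOn_const.mul (hgc.pow 2)))
    · intro r hr
      rw [interior_Ici] at hr
      obtain ⟨hf', hg'⟩ := hode r hr
      have h := ((hg'.pow 2).const_sub 1).mul ((hf'.pow 2).sub ((hg'.pow 2).const_mul b))
      refine (h.congr_deriv ?_).hasDerivWithinAt
      simp only [Pi.pow_apply, hab, Pi.sub_apply]
      push_cast
      ring
    · intro r hr
      rw [interior_Ici] at hr
      have hr' : 0 < r := hr
      have := hpos r hr'.le
      exact neg_nonpos.2 (by positivity)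
  have hH : Filter.Tendsto (fun r => (1 - g r ^ 2) * (f r ^ 2 - b * g r ^ 2)) Filter.atTop
      (nhds ((1 - 0 ^ 2) * (0 ^ 2 - b * 0 ^ 2))) :=
    ((hgl.pow 2).const_sub 1).mul ((hfl.pow 2).sub ((hgl.pow 2).const_mul b))
  have hle := le_of_tendsto hH ((Filter.eventually_ge_atTop 0).mono fun r hr =>
    hanti Set.self_mem_Ici (Set.mem_Ici.2 hr) hr)
  simp only [hf0, hg0] at hle
  have : 0 < (1 - x ^ 2) * (b * x ^ 2) := by positivity
  linarith
end

section
/- Let a, b > 0 with a - 2b > 0, let x ∈ ℝ with x^2 < 1, and let (f_x, g_x) be the solution of the radial system on its maximal interval [0, R_x) with f_x(0) = 0 and g_x(0) = x. Then g_x(r)^2 < 1 for all r ∈ [0, R_x). -/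
/-!
The second equation makes `h = 1 - g²` satisfy the linear equation `h' = -2 f g h`, so `h`, being
positive at `0`, cannot vanish. Concretely, if `|2 f g| ≤ C` on the compact interval `[0, r]`, then
`h² exp (2 C t)` is nondecreasing there, hence bounded below by `h(0)² > 0`; the intermediate value
theorem then keeps `h` positive. The equation for `f` enters only through the continuity of `f`.
-/


/-- For `a, b > 0` with `a - 2b > 0` and `x² < 1`, the solution of the radial
system on `[0, R)` with `f 0 = 0`, `g 0 = x` satisfies `g r ² < 1` for all `r ∈ [0, R)`. -/
theorem radial_system_g_sq_stays_below_one
    (a b : ℝ) (ha : 0 < a) (hb : 0 < b) (hab : 0 < a - 2 * b)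
    (x : ℝ) (hx : x ^ 2 < 1)
    (R : EReal) (hR : 0 < R) (f g : ℝ → ℝ)
    (hfc : ContinuousOn f {r : ℝ | 0 ≤ r ∧ (r : EReal) < R})
    (hgc : ContinuousOn g {r : ℝ | 0 ≤ r ∧ (r : EReal) < R})
    (hf0 : f 0 = 0) (hg0 : g 0 = x)
    (hode : ∀ r : ℝ, 0 < r → (r : EReal) < R →
      HasDerivAt f (g r * ((f r) ^ 2 - a * (g r) ^ 2 + b) - 2 / r * f r) r ∧
      HasDerivAt g (f r * (1 - (g r) ^ 2)) r) :
    ∀ r : ℝ, 0 ≤ r → (r : EReal) < R → (g r) ^ 2 < 1 := by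
  intro r hr0 hrR
  have hsub : Set.Icc 0 r ⊆ {r : ℝ | 0 ≤ r ∧ (r : EReal) < R} := fun t ht =>
    ⟨ht.1, lt_of_le_of_lt (EReal.coe_le_coe_iff.mpr ht.2) hrR⟩
  have hf := hfc.mono hsub
  have hg := hgc.mono hsub
  have hh : ContinuousOn (fun t => 1 - g t ^ 2) (Set.Icc 0 r) :=
    continuousOn_const.sub (hg.pow 2)
  obtain ⟨C, hC⟩ := isCompact_Icc.exists_bound_of_continuousOn
    ((continuousOn_const (c := (2 : ℝ))).mul (hf.mul hg))
  have hmono : MonotoneOn (fun t => (1 - g t ^ 2) ^ 2 * Real.exp (2 * C * t)) (Set.Icc 0 r) := by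
    refine monotoneOn_of_hasDerivWithinAt_nonneg (convex_Icc 0 r)
      ((hh.pow 2).mul (by fun_prop))
      (f' := fun t => 2 * ((1 - g t ^ 2) ^ 2 * Real.exp (2 * C * t)) * (C - 2 * (f t * g t)))
      ?_ ?_
    · intro t ht
      rw [interior_Icc] at ht
      have hg' := (hode t ht.1 (hsub ⟨ht.1.le, ht.2.le⟩).2).2
      have he : HasDerivAt (fun t => Real.exp (2 * C * t)) (Real.exp (2 * C * t) * (2 * C)) t := by
        simpa using ((hasDerivAt_id t).const_mul (2 * C)).exp
      refine (((((hg'.pow 2).const_sub 1).pow 2).mul he).congr_deriv ?_).hasDerivWithinAt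
      simp only [Pi.pow_apply]
      push_cast
      ring
    · intro t ht
      have hb' := (le_abs_self _).trans (hC t (interior_subset ht))
      exact mul_nonneg (by positivity) (sub_nonneg.mpr hb')
  by_contra hcon
  have h0 : 0 < 1 - g 0 ^ 2 := by rw [hg0]; linarith
  obtain ⟨s, hs, hs0⟩ := intermediate_value_Icc' hr0 hh
    (show (0 : ℝ) ∈ Set.Icc (1 - g r ^ 2) (1 - g 0 ^ 2) from ⟨by linarith, h0.le⟩)
  have hle := hmono (Set.left_mem_Icc.mpr hr0) hs hs.1
  simp only at hs0 hle
  rw [hs0] at hle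
  have hpos := pow_pos h0 2
  norm_num at hle
  linarith
end

section
/- Let a, b > 0 with a - 2b > 0, let x ∈ ℝ, and suppose (f_x, g_x) is the solution of the radial system with f_x(0) = 0, g_x(0) = x, defined on all of [0,∞), and satisfying (f_x(r), g_x(r)) → (0,0) as r → +∞. Then x^2 < 1 and g_x(r)^2 < 1 for all r ∈ [0, +∞). -/
/-!
The quantity `u = 1 - g²` satisfies the linear equation `u' = -2 f g u` with coefficients continuous
up to `r = 0`, so `u r * exp (∫₀ʳ 2 f g)` is constant on `[0, ∞)` and the sign of `u` never changes.
Since `g → 0` at infinity, `u` is eventually positive, hence positive everywhere, including at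
`r = 0`, where `u = 1 - x²`.
-/

/-- A solution of the linear equation `u' = -p u` on `(0, ∞)`, continuous up to `0`, that is positive
at some point is positive at all earlier points. -/
theorem pos_of_linear_ode_of_pos (p u : ℝ → ℝ)
    (hp : ContinuousOn p (Set.Ici 0)) (hu : ContinuousOn u (Set.Ici 0))
    (hode : ∀ r : ℝ, 0 < r → HasDerivAt u (-(p r * u r)) r)
    {r s : ℝ} (hr : 0 ≤ r) (hrs : r < s) (hs : 0 < u s) : 0 < u r := by
  -- Extending `p` by a constant to the left of `0` makes its primitive differentiable everywhere.
  have hq : Continuous (fun t => p (max t 0)) :=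
    hp.comp_continuous (by fun_prop) (fun t => le_max_right t 0)
  have hF : ∀ t : ℝ, HasDerivAt (fun t => ∫ y in (0 : ℝ)..t, p (max y 0)) (p (max t 0)) t :=
    fun t => hq.integral_hasStrictDerivAt 0 t |>.hasDerivAt
  set F : ℝ → ℝ := fun t => ∫ y in (0 : ℝ)..t, p (max y 0)
  have hFc : Continuous F := continuous_iff_continuousAt.2 fun t => (hF t).continuousAt
  have hcont : ContinuousOn (fun t => u t * Real.exp (F t)) (Set.Icc r s) :=
    (hu.mono fun t ht => hr.trans ht.1).mul (by fun_prop)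
  obtain ⟨c, -, hc⟩ := exists_hasDerivAt_eq_slope (fun t => u t * Real.exp (F t)) (fun _ => 0)
    hrs hcont fun t ht => by
      have ht0 : 0 < t := hr.trans_lt ht.1
      have h := (hode t ht0).mul (hF t).exp
      rw [max_eq_left ht0.le] at h
      exact h.congr_deriv (by ring)
  have heq : u r * Real.exp (F r) = u s * Real.exp (F s) := by
    have hne : s - r ≠ 0 := (sub_pos.2 hrs).ne'
    field_simp at hc
    linarith
  have hpos : 0 < u r * Real.exp (F r) := heq ▸ mul_pos hs (Real.exp_pos _)
  exact pos_of_mul_pos_left hpos (Real.exp_pos _).le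


/-- For `a, b > 0` with `a - 2b > 0`, if the solution of the radial system
with `f 0 = 0`, `g 0 = x` is defined on all of `[0, ∞)` and converges to `(0, 0)` at
infinity, then `x² < 1` and `g r ² < 1` for all `r ≥ 0`. -/
theorem radial_system_decaying_solution_initial_data_bound
    (a b : ℝ) (ha : 0 < a) (hb : 0 < b) (hab : 0 < a - 2 * b)
    (x : ℝ) (f g : ℝ → ℝ)
    (hfc : ContinuousOn f (Set.Ici 0)) (hgc : ContinuousOn g (Set.Ici 0))
    (hf0 : f 0 = 0) (hg0 : g 0 = x)
    (hode : ∀ r : ℝ, 0 < r →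
      HasDerivAt f (g r * ((f r) ^ 2 - a * (g r) ^ 2 + b) - 2 / r * f r) r ∧
      HasDerivAt g (f r * (1 - (g r) ^ 2)) r)
    (hlim : Filter.Tendsto (fun r => (f r, g r)) Filter.atTop (nhds ((0 : ℝ), (0 : ℝ)))) :
    x ^ 2 < 1 ∧ ∀ r : ℝ, 0 ≤ r → (g r) ^ 2 < 1 := by
  have hg : Filter.Tendsto g Filter.atTop (nhds 0) := hlim.snd_nhds
  have hlt : ∀ᶠ s in Filter.atTop, (g s) ^ 2 < 1 :=
    (hg.pow 2).eventually_lt_const (by norm_num)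
  have key : ∀ r : ℝ, 0 ≤ r → (g r) ^ 2 < 1 := by
    intro r hr
    obtain ⟨s, hs, hrs⟩ := (hlt.and (Filter.eventually_gt_atTop r)).exists
    refine sub_pos.1 (pos_of_linear_ode_of_pos (fun t => 2 * f t * g t) (fun t => 1 - (g t) ^ 2)
      (by fun_prop) (by fun_prop) (fun t ht => ?_) hr hrs (sub_pos.2 hs))
    exact (((hode t ht).2.pow 2).const_sub 1).congr_deriv (by push_cast; ring)
  exact ⟨hg0 ▸ key 0 le_rfl, key⟩
end

section
/- Let a, b > 0 with a - 2b > 0 and let A = {(f₀, g₀) ∈ ℝ^2 : 2 f₀^2 - a g₀^2 - (a - 2b) ≤ 0 and g₀^2 ≤ 1}. Let (f₀, g₀) ∈ A and let (f, g) be the solution of the conservative system f' = g(f^2 - a g^2 + b), g' = f(1 - g^2) with initial data (f(0), g(0)) = (f₀, g₀). Then (f, g) is defined on all of [0, +∞) and (f(r), g(r)) ∈ A for all r ∈ [0, +∞); in particular the trajectory is bounded. -/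
/-!
Put `p = 2 f² - a g² - (a - 2b)` and `q = g² - 1`. Along any solution of the system,
`p' = (2 f g) p` and `q' = (-2 f g) q`, so both quantities solve scalar linear homogeneous equations
and keep their sign (`nonpos_of_linear_ode`). As `A` is `{p ≤ 0, q ≤ 0}`, this gives its invariance,
and `A` is bounded since `g² ≤ 1` and `f² ≤ a` on it.

For global existence, the vector field is multiplied by a smooth cutoff `χ` equal to `1` on a ball
containing `A`. The new field is bounded and Lipschitz, hence has global integral curves
(`exists_global_integralCurve`). Multiplying the field by `χ` only multiplies the coefficients of
the two linear equations by `χ`, so `A` is also invariant under the cut-off system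
(`invariant_region_of_scaled_system`). A solution of it starting in `A` therefore stays where
`χ = 1` and solves the original system.
-/

open Set Metric

/-- A solution of the scalar linear equation `p' = φ p` which is nonpositive at time `0` stays
nonpositive: `p · exp (-∫ φ)` is constant. -/
lemma nonpos_of_linear_ode {T : ℝ} (hT : 0 ≤ T) {p φ : ℝ → ℝ}
    (hφ : ContinuousOn φ (Icc 0 T))
    (hp : ∀ t ∈ Icc (0 : ℝ) T, HasDerivWithinAt p (φ t * p t) (Ici 0) t)
    (h0 : p 0 ≤ 0) : p T ≤ 0 := by
  -- extending `φ` by constants makes its primitive differentiable at every point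
  set ψ : ℝ → ℝ := IccExtend hT ((Icc 0 T).domRestrict φ) with hψ
  have hψc : Continuous ψ := (continuousOn_iff_continuous_domRestrict.mp hφ).Icc_extend'
  have hψφ : ∀ t ∈ Icc (0 : ℝ) T, ψ t = φ t := fun t ht ↦ by
    rw [hψ, IccExtend_of_mem _ _ ht]; rfl
  set E : ℝ → ℝ := fun t ↦ ∫ x in (0 : ℝ)..t, ψ x with hE
  have hEd : ∀ t, HasDerivAt E (ψ t) t := fun t ↦
    (hψc.integral_hasStrictDerivAt 0 t).hasDerivAt
  have hd : ∀ t ∈ Icc (0 : ℝ) T,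
      HasDerivWithinAt (fun t ↦ p t * Real.exp (-E t)) 0 (Ici 0) t := fun t ht ↦ by
    have := (hp t ht).mul ((hEd t).neg.exp.hasDerivWithinAt (s := Ici 0))
    refine this.congr_deriv ?_
    rw [hψφ t ht]
    simp only [Pi.neg_apply]
    ring
  have hconst := constant_of_has_deriv_right_zero (a := 0) (b := T)
    (f := fun t ↦ p t * Real.exp (-E t))
    (fun t ht ↦ ((hd t ht).continuousWithinAt).mono Icc_subset_Ici_self)
    (fun t ht ↦ (hd t (Ico_subset_Icc_self ht)).mono (Ici_subset_Ici.mpr ht.1))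
    T (right_mem_Icc.mpr hT)
  have hE0 : E 0 = 0 := by simp [hE]
  simp only [hE0, neg_zero, Real.exp_zero, mul_one] at hconst
  by_contra! hpos
  have := mul_pos hpos (Real.exp_pos (-E T))
  linarith

/-- The region `A` is invariant under the conservative system multiplied by a continuous
time-dependent factor `c`. -/
lemma invariant_region_of_scaled_system {a b R : ℝ} {c f g : ℝ → ℝ}
    (hc : ContinuousOn c (Ico 0 R))
    (hf : ∀ r ∈ Ico (0 : ℝ) R,
      HasDerivWithinAt f (c r * (g r * ((f r) ^ 2 - a * (g r) ^ 2 + b))) (Ici 0) r)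
    (hg : ∀ r ∈ Ico (0 : ℝ) R,
      HasDerivWithinAt g (c r * (f r * (1 - (g r) ^ 2))) (Ici 0) r)
    (hA1 : 2 * f 0 ^ 2 - a * g 0 ^ 2 - (a - 2 * b) ≤ 0) (hA2 : g 0 ^ 2 ≤ 1) :
    ∀ r ∈ Ico (0 : ℝ) R,
      2 * (f r) ^ 2 - a * (g r) ^ 2 - (a - 2 * b) ≤ 0 ∧ (g r) ^ 2 ≤ 1 := by
  intro r hr
  have hsub : Icc 0 r ⊆ Ico 0 R := fun t ht ↦ ⟨ht.1, ht.2.trans_lt hr.2⟩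
  have hcc : ContinuousOn c (Icc 0 r) := hc.mono hsub
  have hfc : ContinuousOn f (Icc 0 r) := fun t ht ↦
    (hf t (hsub ht)).continuousWithinAt.mono Icc_subset_Ici_self
  have hgc : ContinuousOn g (Icc 0 r) := fun t ht ↦
    (hg t (hsub ht)).continuousWithinAt.mono Icc_subset_Ici_self
  constructor
  · refine nonpos_of_linear_ode hr.1 (φ := fun t ↦ c t * (2 * f t * g t))
      (p := fun t ↦ 2 * (f t) ^ 2 - a * (g t) ^ 2 - (a - 2 * b)) (by fun_prop) (fun t ht ↦ ?_) hA1
    have := ((((hf t (hsub ht)).fun_pow 2).const_mul 2).sub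
      (((hg t (hsub ht)).fun_pow 2).const_mul a)).sub_const (a - 2 * b)
    refine this.congr_deriv ?_
    push_cast
    ring
  · suffices (g r) ^ 2 - 1 ≤ 0 by linarith
    refine nonpos_of_linear_ode hr.1 (φ := fun t ↦ -(c t * (2 * f t * g t)))
      (p := fun t ↦ (g t) ^ 2 - 1) (by fun_prop) (fun t ht ↦ ?_) (by linarith)
    have := ((hg t (hsub ht)).fun_pow 2).sub_const 1
    refine this.congr_deriv ?_
    push_cast
    ring

/-- A bounded Lipschitz vector field on a Banach space has a global integral curve through every
point: Picard–Lindelöf gives a solution on each `[-n, n]`, and these agree by uniqueness. -/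
lemma exists_global_integralCurve {E : Type*} [NormedAddCommGroup E] [NormedSpace ℝ E]
    [CompleteSpace E] {v : E → E} {K L : NNReal} (hv : LipschitzWith K v)
    (hL : ∀ x, ‖v x‖ ≤ L) (x₀ : E) :
    ∃ γ : ℝ → E, γ 0 = x₀ ∧ ∀ t, HasDerivAt γ (v (γ t)) t := by
  have hloc : ∀ n : NNReal, ∃ γ : ℝ → E, γ 0 = x₀ ∧
      ∀ t ∈ Ioo (-(n : ℝ)) n, HasDerivAt γ (v (γ t)) t := by
    intro n
    have hpl : IsPicardLindelof (fun _ ↦ v) (tmin := -(n : ℝ)) (tmax := n)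
        ⟨0, by simp⟩ x₀ (L * n) 0 L K :=
      .of_time_independent (fun x _ ↦ hL x) hv.lipschitzOnWith (by simp)
    obtain ⟨γ, h0, hγ⟩ := hpl.exists_eq_forall_mem_Icc_hasDerivWithinAt₀
    exact ⟨γ, h0, fun t ht ↦ (hγ t (Ioo_subset_Icc_self ht)).hasDerivAt (Icc_mem_nhds ht.1 ht.2)⟩
  choose γ h0 hγ using hloc
  have huniq : ∀ m n : NNReal, m ≤ n → EqOn (γ m) (γ n) (Ioo (-(m : ℝ)) m) := by
    intro m n hmn t ht
    have hmn' : (m : ℝ) ≤ n := hmn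
    exact ODE_solution_unique_of_mem_Ioo (v := fun _ ↦ v) (s := fun _ ↦ univ) (K := K) (t₀ := 0)
      (fun _ _ ↦ hv.lipschitzOnWith) (by constructor <;> linarith [ht.1, ht.2])
      (fun s hs ↦ ⟨hγ m s hs, mem_univ _⟩)
      (fun s hs ↦ ⟨hγ n s ⟨by linarith [hs.1], by linarith [hs.2]⟩, mem_univ _⟩)
      ((h0 m).trans (h0 n).symm) ht
  refine ⟨fun t ↦ γ (Real.nnabs t + 1) t, h0 _, fun t ↦ ?_⟩
  -- near `t` the glued curve coincides with the local solution on `(-(|t| + 2), |t| + 2)`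
  set N : NNReal := Real.nnabs t + 2 with hN
  have ht : t ∈ Ioo (-(|t| + 1)) (|t| + 1) := abs_lt.mp (lt_add_one _)
  have hev : (fun s ↦ γ (Real.nnabs s + 1) s) =ᶠ[nhds t] γ N := by
    filter_upwards [Ioo_mem_nhds ht.1 ht.2] with s hs
    have hs' : |s| < |t| + 1 := abs_lt.mpr hs
    refine huniq _ _ ?_ ?_
    · rw [← NNReal.coe_le_coe]
      simp only [hN, NNReal.coe_add, Real.coe_nnabs, NNReal.coe_one, NNReal.coe_ofNat]
      linarith
    · simp only [NNReal.coe_add, Real.coe_nnabs, NNReal.coe_one]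
      exact abs_lt.mp (lt_add_one _)
  have hder := hγ N t (by
    simp only [hN, NNReal.coe_add, Real.coe_nnabs, NNReal.coe_ofNat]
    exact ⟨by linarith [ht.1], by linarith [ht.2]⟩)
  rw [← hev.eq_of_nhds] at hder
  exact hder.congr_of_eventuallyEq hev


/-- For `a, b > 0` with `a - 2b > 0` and admissible initial data
`(f₀, g₀) ∈ A = {(f₀, g₀) : 2 f₀² - a g₀² - (a - 2b) ≤ 0, g₀² ≤ 1}`, the solution of
the conservative system `f' = g (f² - a g² + b)`, `g' = f (1 - g²)` is defined on all
of `[0, ∞)`, stays in `A`, and in particular its trajectory is bounded.  This is stated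
both as existence of a global solution remaining in `A` (and bounded), and as the
invariance of `A` for any solution on an interval `[0, R)`. -/
theorem conservative_system_invariant_region
    (a b : ℝ) (ha : 0 < a) (hb : 0 < b) (hab : 0 < a - 2 * b)
    (f₀ g₀ : ℝ)
    (hA1 : 2 * f₀ ^ 2 - a * g₀ ^ 2 - (a - 2 * b) ≤ 0) (hA2 : g₀ ^ 2 ≤ 1) :
    (∃ f g : ℝ → ℝ, f 0 = f₀ ∧ g 0 = g₀ ∧
      (∀ r ∈ Set.Ici (0 : ℝ),
        HasDerivWithinAt f (g r * ((f r) ^ 2 - a * (g r) ^ 2 + b)) (Set.Ici 0) r ∧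
        HasDerivWithinAt g (f r * (1 - (g r) ^ 2)) (Set.Ici 0) r) ∧
      (∀ r ∈ Set.Ici (0 : ℝ),
        2 * (f r) ^ 2 - a * (g r) ^ 2 - (a - 2 * b) ≤ 0 ∧ (g r) ^ 2 ≤ 1) ∧
      (∃ M : ℝ, ∀ r ∈ Set.Ici (0 : ℝ), |f r| ≤ M ∧ |g r| ≤ M)) ∧
    (∀ (R : ℝ) (f g : ℝ → ℝ), f 0 = f₀ → g 0 = g₀ →
      (∀ r ∈ Set.Ico (0 : ℝ) R,
        HasDerivWithinAt f (g r * ((f r) ^ 2 - a * (g r) ^ 2 + b)) (Set.Ici 0) r ∧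
        HasDerivWithinAt g (f r * (1 - (g r) ^ 2)) (Set.Ici 0) r) →
      ∀ r ∈ Set.Ico (0 : ℝ) R,
        2 * (f r) ^ 2 - a * (g r) ^ 2 - (a - 2 * b) ≤ 0 ∧ (g r) ^ 2 ≤ 1) := by
  have hinv : ∀ (R : ℝ) (f g : ℝ → ℝ), f 0 = f₀ → g 0 = g₀ →
      (∀ r ∈ Set.Ico (0 : ℝ) R,
        HasDerivWithinAt f (g r * ((f r) ^ 2 - a * (g r) ^ 2 + b)) (Set.Ici 0) r ∧
        HasDerivWithinAt g (f r * (1 - (g r) ^ 2)) (Set.Ici 0) r) →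
      ∀ r ∈ Set.Ico (0 : ℝ) R,
        2 * (f r) ^ 2 - a * (g r) ^ 2 - (a - 2 * b) ≤ 0 ∧ (g r) ^ 2 ≤ 1 := by
    intro R f g hf0 hg0 h
    subst hf0 hg0
    exact invariant_region_of_scaled_system (c := fun _ ↦ 1) continuousOn_const
      (fun r hr ↦ by simpa using (h r hr).1) (fun r hr ↦ by simpa using (h r hr).2) hA1 hA2
  refine ⟨?_, hinv⟩
  have hbound : ∀ x y : ℝ, 2 * x ^ 2 - a * y ^ 2 - (a - 2 * b) ≤ 0 → y ^ 2 ≤ 1 →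
      |x| ≤ a + 1 ∧ |y| ≤ a + 1 := fun x y h1 h2 ↦
    ⟨abs_le_of_sq_le_sq (by nlinarith) (by linarith),
      abs_le_of_sq_le_sq (by nlinarith) (by linarith)⟩
  -- in the sup norm of `ℝ × ℝ`, the closed ball of radius `a + 1` contains `A`
  let χ : ContDiffBump (0 : ℝ × ℝ) := ⟨a + 1, a + 2, by linarith, by linarith⟩
  let w : ℝ × ℝ → ℝ × ℝ := fun z ↦ (z.2 * (z.1 ^ 2 - a * z.2 ^ 2 + b), z.1 * (1 - z.2 ^ 2))
  let v : ℝ × ℝ → ℝ × ℝ := fun z ↦ χ z • w z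
  have hvs : HasCompactSupport v := χ.hasCompactSupport.smul_right
  have hw : ContDiff ℝ 1 w := by fun_prop
  have hvd : ContDiff ℝ 1 v := χ.contDiff.smul hw
  obtain ⟨K, hK⟩ := hvd.lipschitzWith_of_hasCompactSupport hvs one_ne_zero
  obtain ⟨L, hL⟩ := hvs.exists_bound_of_continuous hvd.continuous
  obtain ⟨γ, h0, hγ⟩ := exists_global_integralCurve (L := L.toNNReal) hK
    (fun x ↦ (hL x).trans (Real.le_coe_toNNReal L)) (f₀, g₀)
  have hγc : Continuous γ := continuous_iff_continuousAt.mpr fun t ↦ (hγ t).continuousAt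
  have hγ1 : ∀ t, HasDerivAt (fun t ↦ (γ t).1) (v (γ t)).1 t := fun t ↦
    (ContinuousLinearMap.fst ℝ ℝ ℝ).hasFDerivAt.comp_hasDerivAt t (hγ t)
  have hγ2 : ∀ t, HasDerivAt (fun t ↦ (γ t).2) (v (γ t)).2 t := fun t ↦
    (ContinuousLinearMap.snd ℝ ℝ ℝ).hasFDerivAt.comp_hasDerivAt t (hγ t)
  have hA : ∀ r ∈ Ici (0 : ℝ),
      2 * (γ r).1 ^ 2 - a * (γ r).2 ^ 2 - (a - 2 * b) ≤ 0 ∧ (γ r).2 ^ 2 ≤ 1 := fun r hr ↦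
    invariant_region_of_scaled_system (R := r + 1) (c := fun t ↦ χ (γ t))
      (f := fun t ↦ (γ t).1) (g := fun t ↦ (γ t).2)
      (χ.continuous.comp hγc).continuousOn
      (fun t _ ↦ (hγ1 t).hasDerivWithinAt)
      (fun t _ ↦ (hγ2 t).hasDerivWithinAt)
      (by simpa [h0] using hA1) (by simpa [h0] using hA2) r ⟨hr, by linarith⟩
  have hχ : ∀ r ∈ Ici (0 : ℝ), v (γ r) = w (γ r) := fun r hr ↦ by
    have hb := hbound _ _ (hA r hr).1 (hA r hr).2
    have : χ (γ r) = 1 := χ.one_of_mem_closedBall (by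
      rw [mem_closedBall_zero_iff, Prod.norm_def]
      exact max_le hb.1 hb.2)
    simp [v, this]
  refine ⟨fun r ↦ (γ r).1, fun r ↦ (γ r).2, by simp [h0], by simp [h0], fun r hr ↦ ?_, hA,
    a + 1, fun r hr ↦ hbound _ _ (hA r hr).1 (hA r hr).2⟩
  have hd1 := hγ1 r
  have hd2 := hγ2 r
  rw [hχ r hr] at hd1 hd2
  exact ⟨hd1.hasDerivWithinAt, hd2.hasDerivWithinAt⟩
end

section
/- Let a, b > 0 with a - 2b > 0 and let A = {(f₀, g₀) ∈ ℝ^2 : 2 f₀^2 - a g₀^2 - (a - 2b) ≤ 0 and g₀^2 ≤ 1}. Let (f₀, g₀) ∈ A and let (f, g) be the solution on [0,∞) of the conservative system f' = g(f^2 - a g^2 + b), g' = f(1 - g^2) with initial data (f₀, g₀). Let (f_n^0, g_n^0) ∈ A and ρ_n > 0 be sequences with ρ_n → +∞ and (f_n^0, g_n^0) → (f₀, g₀) as n → ∞. For each n let (f_n, g_n) be the solution of f_n'(r) + (2/(ρ_n + r)) f_n(r) = g_n(r)(f_n(r)^2 - a g_n(r)^2 + b), g_n'(r) = f_n(r)(1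 - g_n(r)^2) with f_n(0) = f_n^0, g_n(0) = g_n^0, on its maximal interval [0, τ_n). Then τ_n → +∞, and (f_n, g_n) converges to (f, g) uniformly on every bounded interval [0, R] (for n large enough that τ_n > R). -/
/-!
Continuous dependence on data and parameters, by a barrier argument. On `[0, R]` the limit
solution `(f, g)` is bounded, so near its graph the polynomial vector field is Lipschitz with some
constant and the damping term is `O(1 / ρₙ)`. Hence `u = (fₙ - f)² + (gₙ - g)²` satisfies
`u' ≤ C u + O(1 / ρₙ)` at every point where `u ≤ 1` (`two_mul_deriv_diff_le`). The function
`B r = η exp ((C + 1) r)`, with `η` so small that `B ≤ δ² ≤ 1` on `[0, R]`, is therefore a strict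
supersolution once `ρₙ` is large: the differential inequality is only needed where `u = B`, so no
a priori bound on `(fₙ, gₙ)` is required. This gives `u ≤ B ≤ δ²` on `[0, R] ∩ [0, τₙ)`
(`sq_diff_le_of_barrier`). A blow-up at `τₙ ≤ R` would contradict this bound, so `τₙ > R`.

Only the existence of `(f, g)` on all of `[0, ∞)` enters; admissibility of the data, which
guarantees that existence, is not used otherwise.
-/

/-- The Lipschitz estimate behind the barrier: half of the left side is the inner product of the
displacement `(p - f, q - g)` with the difference of the two vector fields, and `s` stands for the
damping coefficient `2 / (ρ + r)`. -/
lemma two_mul_deriv_diff_le {a b M f g p q s : ℝ} (ha : 0 ≤ a) (hb : 0 ≤ b)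
    (hM : 1 ≤ M) (hf : |f| ≤ M) (hg : |g| ≤ M) (hp : |p| ≤ M) (hq : |q| ≤ M)
    (hs : 0 ≤ s) (hpf : |p - f| ≤ 1) :
    2 * (p - f) * ((q * (p ^ 2 - a * q ^ 2 + b) - s * p) - g * (f ^ 2 - a * g ^ 2 + b))
      + 2 * (q - g) * (p * (1 - q ^ 2) - f * (1 - g ^ 2))
      ≤ 4 * (3 * M ^ 2 * (1 + a) + b) * ((p - f) ^ 2 + (q - g) ^ 2) + 2 * M * s := by
  have hM0 : 0 ≤ M := by linarith
  have hp2 : p ^ 2 ≤ M ^ 2 := sq_le_sq' (abs_le.1 hp).1 (abs_le.1 hp).2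
  have hq2 : q ^ 2 ≤ M ^ 2 := sq_le_sq' (abs_le.1 hq).1 (abs_le.1 hq).2
  have hM2 : 1 ≤ M ^ 2 := one_le_pow₀ hM
  set L := 3 * M ^ 2 * (1 + a) + b with hL
  have haM : 0 ≤ a * M ^ 2 := by positivity
  have hgpf : |g * (p + f)| ≤ 2 * M ^ 2 := by
    rw [abs_mul]
    have : |p + f| ≤ 2 * M := (abs_add_le p f).trans (by linarith)
    calc |g| * |p + f| ≤ M * (2 * M) := by gcongr
      _ = 2 * M ^ 2 := by ring
  have hgqg : |g * (q + g)| ≤ 2 * M ^ 2 := by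
    rw [abs_mul]
    have : |q + g| ≤ 2 * M := (abs_add_le q g).trans (by linarith)
    calc |g| * |q + g| ≤ M * (2 * M) := by gcongr
      _ = 2 * M ^ 2 := by ring
  have hfqg : |f * (q + g)| ≤ 2 * M ^ 2 := by
    rw [abs_mul]
    have : |q + g| ≤ 2 * M := (abs_add_le q g).trans (by linarith)
    calc |f| * |q + g| ≤ M * (2 * M) := by gcongr
      _ = 2 * M ^ 2 := by ring
  have haq2 : a * q ^ 2 ≤ a * M ^ 2 := by gcongr
  have haq0 : 0 ≤ a * q ^ 2 := by positivity
  have hagqg : |a * (g * (q + g))| ≤ 2 * (a * M ^ 2) := by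
    rw [abs_mul, abs_of_nonneg ha]
    nlinarith
  rw [abs_le] at hgpf hfqg hagqg
  -- the four entries of the difference quotient matrix are bounded by `L`
  have h1 : |g * (p + f)| ≤ L := by
    rw [abs_le]; constructor <;> nlinarith
  have h2 : |p ^ 2 - a * q ^ 2 + b - a * (g * (q + g))| ≤ L := by
    rw [abs_le]; constructor <;> nlinarith [sq_nonneg p]
  have h3 : |1 - q ^ 2| ≤ L := by
    rw [abs_le]; constructor <;> nlinarith [sq_nonneg q]
  have h4 : |f * (q + g)| ≤ L := by
    rw [abs_le]; constructor <;> nlinarith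
  have hF : |q * (p ^ 2 - a * q ^ 2 + b) - g * (f ^ 2 - a * g ^ 2 + b)|
      ≤ L * (|p - f| + |q - g|) := by
    have e : q * (p ^ 2 - a * q ^ 2 + b) - g * (f ^ 2 - a * g ^ 2 + b)
        = g * (p + f) * (p - f) + (p ^ 2 - a * q ^ 2 + b - a * (g * (q + g))) * (q - g) := by
      ring
    rw [e]
    refine (abs_add_le _ _).trans ?_
    rw [abs_mul _ (p - f), abs_mul _ (q - g), mul_add L]
    exact add_le_add (mul_le_mul_of_nonneg_right h1 (abs_nonneg _))
      (mul_le_mul_of_nonneg_right h2 (abs_nonneg _))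
  have hG : |p * (1 - q ^ 2) - f * (1 - g ^ 2)| ≤ L * (|p - f| + |q - g|) := by
    have e : p * (1 - q ^ 2) - f * (1 - g ^ 2)
        = (1 - q ^ 2) * (p - f) + -(f * (q + g)) * (q - g) := by
      ring
    rw [e]
    refine (abs_add_le _ _).trans ?_
    rw [abs_mul _ (p - f), abs_mul _ (q - g), abs_neg, mul_add L]
    exact add_le_add (mul_le_mul_of_nonneg_right h3 (abs_nonneg _))
      (mul_le_mul_of_nonneg_right h4 (abs_nonneg _))
  have hL0 : 0 ≤ L := (abs_nonneg _).trans h1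
  have hdF : (p - f) * (q * (p ^ 2 - a * q ^ 2 + b) - g * (f ^ 2 - a * g ^ 2 + b))
      ≤ |p - f| * (L * (|p - f| + |q - g|)) := by
    refine (le_abs_self _).trans ?_
    rw [abs_mul]
    gcongr
  have hdG : (q - g) * (p * (1 - q ^ 2) - f * (1 - g ^ 2))
      ≤ |q - g| * (L * (|p - f| + |q - g|)) := by
    refine (le_abs_self _).trans ?_
    rw [abs_mul]
    gcongr
  have hdamp : -((p - f) * p) ≤ M := by
    refine (neg_le_abs _).trans ?_
    rw [abs_mul]
    calc |p - f| * |p| ≤ 1 * M := by gcongr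
      _ = M := one_mul M
  have hdamp' : s * -((p - f) * p) ≤ s * M := by gcongr
  have hsq : L * (|p - f| + |q - g|) ^ 2 ≤ L * (2 * ((p - f) ^ 2 + (q - g) ^ 2)) := by
    gcongr
    rw [← sq_abs (p - f), ← sq_abs (q - g)]
    exact add_sq_le
  clear_value L
  linarith

/-- If `(p, q)` solves the damped system on `[0, T]`, starts `η`-close (in squared distance) to
the conservative solution `(f, g)`, and `ρ` is large compared with `1 / η`, then the squared
distance stays below `δ²`, where `η` is `δ²` discounted exponentially over `[0, R]`. -/
lemma sq_diff_le_of_barrier {a b M δ η C R T ρ : ℝ} {f g p q : ℝ → ℝ}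
    (ha : 0 ≤ a) (hb : 0 ≤ b) (hM : 1 ≤ M) (hδ1 : δ ^ 2 ≤ 1) (hη : 0 < η)
    (hC : C = 4 * (3 * M ^ 2 * (1 + a) + b) + 1) (hηδ : η * Real.exp (C * R) ≤ δ ^ 2)
    (hTR : T ≤ R) (hρ : 0 < ρ) (hρη : 4 * M / ρ < η)
    (hfM : ∀ r ∈ Set.Icc 0 R, |f r| + 1 ≤ M) (hgM : ∀ r ∈ Set.Icc 0 R, |g r| + 1 ≤ M)
    (hfg : ∀ r ∈ Set.Ici (0 : ℝ),
      HasDerivWithinAt f (g r * ((f r) ^ 2 - a * (g r) ^ 2 + b)) (Set.Ici 0) r ∧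
      HasDerivWithinAt g (f r * (1 - (g r) ^ 2)) (Set.Ici 0) r)
    (hpq : ∀ r ∈ Set.Icc 0 T,
      HasDerivWithinAt p
        (q r * ((p r) ^ 2 - a * (q r) ^ 2 + b) - 2 / (ρ + r) * p r) (Set.Ici 0) r ∧
      HasDerivWithinAt q (p r * (1 - (q r) ^ 2)) (Set.Ici 0) r)
    (h0 : (p 0 - f 0) ^ 2 + (q 0 - g 0) ^ 2 ≤ η) :
    ∀ r ∈ Set.Icc 0 T, (p r - f r) ^ 2 + (q r - g r) ^ 2 ≤ δ ^ 2 := by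
  have hC0 : 0 ≤ C := by rw [hC]; positivity
  have hBδ : ∀ r ∈ Set.Icc 0 T, η * Real.exp (C * r) ≤ δ ^ 2 := by
    intro r hr
    refine le_trans ?_ hηδ
    gcongr
    exact hr.2.trans hTR
  have hu : ∀ r ∈ Set.Icc 0 T, HasDerivWithinAt
      (fun r => (p r - f r) ^ 2 + (q r - g r) ^ 2)
      (2 * (p r - f r) * ((q r * ((p r) ^ 2 - a * (q r) ^ 2 + b) - 2 / (ρ + r) * p r)
          - g r * ((f r) ^ 2 - a * (g r) ^ 2 + b))
        + 2 * (q r - g r) * (p r * (1 - (q r) ^ 2) - f r * (1 - (g r) ^ 2)))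
      (Set.Ici 0) r := by
    intro r hr
    have h1 := ((hpq r hr).1.sub (hfg r hr.1).1).pow 2
    have h2 := ((hpq r hr).2.sub (hfg r hr.1).2).pow 2
    refine (h1.add h2).congr_deriv ?_
    simp
  have hB : ∀ r, HasDerivAt (fun r => η * Real.exp (C * r)) (C * (η * Real.exp (C * r))) r := by
    intro r
    have h := (((hasDerivAt_id r).const_mul C).exp).const_mul η
    refine h.congr_deriv ?_
    simp only [id_eq]
    ring
  have key := image_le_of_deriv_right_lt_deriv_boundary'
    (f := fun r => (p r - f r) ^ 2 + (q r - g r) ^ 2) (a := 0) (b := T)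
    (B := fun r => η * Real.exp (C * r))
    (fun r hr => (hu r hr).continuousWithinAt.mono Set.Icc_subset_Ici_self)
    (fun r hr => (hu r (Set.Ico_subset_Icc_self hr)).mono (Set.Ici_subset_Ici.2 hr.1))
    (by simpa using h0)
    (fun r _ => (hB r).continuousAt.continuousWithinAt)
    (fun r _ => (hB r).hasDerivWithinAt)
    (by
      intro r hr heq
      have hrT := Set.Ico_subset_Icc_self hr
      have hrR : r ∈ Set.Icc 0 R := ⟨hrT.1, hrT.2.trans hTR⟩
      have hr0 : 0 ≤ r := hr.1
      have heq' : (p r - f r) ^ 2 + (q r - g r) ^ 2 = η * Real.exp (C * r) := heq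
      have hle : (p r - f r) ^ 2 + (q r - g r) ^ 2 ≤ 1 := by
        rw [heq']; exact (hBδ r hrT).trans hδ1
      have hpf : |p r - f r| ≤ 1 := by
        rw [← sq_le_one_iff_abs_le_one]; nlinarith [sq_nonneg (q r - g r)]
      have hqg : |q r - g r| ≤ 1 := by
        rw [← sq_le_one_iff_abs_le_one]; nlinarith [sq_nonneg (p r - f r)]
      have hf := hfM r hrR
      have hg := hgM r hrR
      have hp : |p r| ≤ M := by
        have := abs_add_le (p r - f r) (f r)
        rw [sub_add_cancel] at this
        linarith
      have hq : |q r| ≤ M := by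
        have := abs_add_le (q r - g r) (g r)
        rw [sub_add_cancel] at this
        linarith
      have hs : 2 / (ρ + r) ≤ 2 / ρ := by gcongr; linarith
      have est := two_mul_deriv_diff_le (f := f r) (g := g r) (s := 2 / (ρ + r)) ha hb hM
        (by linarith) (by linarith) hp hq (by positivity) hpf
      have hηB : η ≤ η * Real.exp (C * r) := by
        have := Real.one_le_exp (mul_nonneg hC0 hr0)
        nlinarith
      have hs' : 2 * M * (2 / (ρ + r)) ≤ 4 * M / ρ := by
        calc 2 * M * (2 / (ρ + r)) ≤ 2 * M * (2 / ρ) := by gcongr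
          _ = 4 * M / ρ := by ring
      refine est.trans_lt ?_
      rw [heq']
      -- `C` exceeds the Lipschitz constant by one, and the spare `B r ≥ η` absorbs the damping
      have hCB : C * (η * Real.exp (C * r))
          = 4 * (3 * M ^ 2 * (1 + a) + b) * (η * Real.exp (C * r)) + η * Real.exp (C * r) := by
        nth_rewrite 1 [hC]
        ring
      rw [hCB]
      linarith)
  intro r hr
  exact (key hr).trans (hBδ r hr)


/-- Continuous dependence / convergence lemma.  Let `(f, g)` be the global
solution of the conservative system with admissible initial data `(f₀, g₀) ∈ A`.  Let
`(fₙ⁰, gₙ⁰) ∈ A` and `ρₙ > 0` with `ρₙ → ∞` and `(fₙ⁰, gₙ⁰) → (f₀, g₀)`, and for each `n`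
let `(fₙ, gₙ)` be the maximal solution on `[0, τₙ)` of the shifted radial system
`fₙ' + (2/(ρₙ + r)) fₙ = gₙ (fₙ² - a gₙ² + b)`, `gₙ' = fₙ (1 - gₙ²)` with data
`(fₙ⁰, gₙ⁰)`.  Then `τₙ → ∞` and `(fₙ, gₙ) → (f, g)` uniformly on every bounded
interval `[0, R]`. -/
theorem shifted_radial_system_converges_to_conservative
    (a b : ℝ) (ha : 0 < a) (hb : 0 < b) (hab : 0 < a - 2 * b)
    (f₀ g₀ : ℝ)
    (hA1 : 2 * f₀ ^ 2 - a * g₀ ^ 2 - (a - 2 * b) ≤ 0) (hA2 : g₀ ^ 2 ≤ 1)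
    (f g : ℝ → ℝ) (hf0 : f 0 = f₀) (hg0 : g 0 = g₀)
    (hode : ∀ r ∈ Set.Ici (0 : ℝ),
      HasDerivWithinAt f (g r * ((f r) ^ 2 - a * (g r) ^ 2 + b)) (Set.Ici 0) r ∧
      HasDerivWithinAt g (f r * (1 - (g r) ^ 2)) (Set.Ici 0) r)
    (f0 g0 : ℕ → ℝ) (ρ : ℕ → ℝ)
    (hA1n : ∀ n, 2 * (f0 n) ^ 2 - a * (g0 n) ^ 2 - (a - 2 * b) ≤ 0)
    (hA2n : ∀ n, (g0 n) ^ 2 ≤ 1)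
    (hρpos : ∀ n, 0 < ρ n)
    (hρ : Filter.Tendsto ρ Filter.atTop Filter.atTop)
    (hconv : Filter.Tendsto (fun n => (f0 n, g0 n)) Filter.atTop (nhds (f₀, g₀)))
    (fn gn : ℕ → ℝ → ℝ) (τ : ℕ → EReal)
    (hτpos : ∀ n, 0 < τ n)
    (hfn0 : ∀ n, fn n 0 = f0 n) (hgn0 : ∀ n, gn n 0 = g0 n)
    (hfnc : ∀ n, ContinuousOn (fn n) {r : ℝ | 0 ≤ r ∧ (r : EReal) < τ n})
    (hgnc : ∀ n, ContinuousOn (gn n) {r : ℝ | 0 ≤ r ∧ (r : EReal) < τ n})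
    (hoden : ∀ n, ∀ r : ℝ, 0 ≤ r → (r : EReal) < τ n →
      HasDerivWithinAt (fn n)
        (gn n r * ((fn n r) ^ 2 - a * (gn n r) ^ 2 + b) - 2 / (ρ n + r) * fn n r)
        (Set.Ici 0) r ∧
      HasDerivWithinAt (gn n) (fn n r * (1 - (gn n r) ^ 2)) (Set.Ici 0) r)
    (hmax : ∀ n, τ n = ⊤ ∨ (τ n ≠ ⊤ ∧
      Filter.Tendsto (fun r => |fn n r| + |gn n r|)
        (nhdsWithin (τ n).toReal (Set.Iio (τ n).toReal)) Filter.atTop)) :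
    (∀ M : ℝ, ∀ᶠ n in Filter.atTop, (M : EReal) < τ n) ∧
    (∀ R : ℝ, 0 < R →
      TendstoUniformlyOn (fun n r => (fn n r, gn n r)) (fun r => (f r, g r))
        Filter.atTop (Set.Icc 0 R)) := by
  -- the local claim on `[0, R]`, from which both conclusions follow
  have main : ∀ R : ℝ, 0 < R → ∀ ε : ℝ, 0 < ε → ∀ᶠ n in Filter.atTop,
      (R : EReal) < τ n ∧
        ∀ r ∈ Set.Icc 0 R, |fn n r - f r| < ε ∧ |gn n r - g r| < ε := by
    intro R hR ε hε
    have hfc : ContinuousOn f (Set.Icc 0 R) := fun r hr =>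
      (hode r hr.1).1.continuousWithinAt.mono Set.Icc_subset_Ici_self
    have hgc : ContinuousOn g (Set.Icc 0 R) := fun r hr =>
      (hode r hr.1).2.continuousWithinAt.mono Set.Icc_subset_Ici_self
    obtain ⟨Kf, hKf⟩ := isCompact_Icc.exists_bound_of_continuousOn hfc
    obtain ⟨Kg, hKg⟩ := isCompact_Icc.exists_bound_of_continuousOn hgc
    obtain ⟨M, hMf, hMg, hM⟩ : ∃ M : ℝ, Kf + 1 ≤ M ∧ Kg + 1 ≤ M ∧ 1 ≤ M :=
      ⟨max (max (Kf + 1) (Kg + 1)) 1, by simp, by simp, by simp⟩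
    have hfM : ∀ r ∈ Set.Icc 0 R, |f r| + 1 ≤ M := fun r hr => by
      have := hKf r hr
      rw [Real.norm_eq_abs] at this
      linarith
    have hgM : ∀ r ∈ Set.Icc 0 R, |g r| + 1 ≤ M := fun r hr => by
      have := hKg r hr
      rw [Real.norm_eq_abs] at this
      linarith
    obtain ⟨δ, hδ, hδε, hδ1⟩ : ∃ δ : ℝ, 0 < δ ∧ δ < ε ∧ δ ≤ 1 :=
      ⟨min (ε / 2) 1, by positivity, (min_le_left _ _).trans_lt (by linarith), min_le_right _ _⟩
    have hδ1' : δ ^ 2 ≤ 1 := pow_le_one₀ hδ.le hδ1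
    obtain ⟨C, hC⟩ : ∃ C, C = 4 * (3 * M ^ 2 * (1 + a) + b) + 1 := ⟨_, rfl⟩
    obtain ⟨η, hη, hηδ⟩ : ∃ η : ℝ, 0 < η ∧ η * Real.exp (C * R) ≤ δ ^ 2 :=
      ⟨δ ^ 2 / Real.exp (C * R), by positivity, by
        rw [div_mul_cancel₀ _ (Real.exp_ne_zero _)]⟩
    have hinit : ∀ᶠ n in Filter.atTop, (f0 n - f₀) ^ 2 + (g0 n - g₀) ^ 2 < η := by
      have hc : Filter.Tendsto (fun n => (f0 n - f₀) ^ 2 + (g0 n - g₀) ^ 2) Filter.atTop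
          (nhds ((f₀ - f₀) ^ 2 + (g₀ - g₀) ^ 2)) :=
        ((((continuous_fst.tendsto _).comp hconv).sub_const f₀).pow 2).add
          ((((continuous_snd.tendsto _).comp hconv).sub_const g₀).pow 2)
      exact hc.eventually_lt_const (by simpa using hη)
    filter_upwards [hinit, hρ.eventually_gt_atTop (4 * M / η)] with n hn hρn
    have hρη : 4 * M / ρ n < η := by
      rw [div_lt_iff₀ hη] at hρn
      rw [div_lt_iff₀ (hρpos n)]
      linarith
    have close : ∀ r, 0 ≤ r → r ≤ R → (r : EReal) < τ n →
        |fn n r - f r| ≤ δ ∧ |gn n r - g r| ≤ δ := by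
      intro r hr0 hrR hrτ
      have := sq_diff_le_of_barrier (p := fn n) (q := gn n) ha.le hb.le hM hδ1' hη hC hηδ hrR
        (hρpos n) hρη hfM hgM hode
        (fun t ht => hoden n t ht.1 ((EReal.coe_le_coe_iff.2 ht.2).trans_lt hrτ))
        (by rw [hfn0, hgn0, hf0, hg0]; exact hn.le) r ⟨hr0, le_rfl⟩
      constructor
      · exact abs_le_of_sq_le_sq (by nlinarith [sq_nonneg (gn n r - g r)]) hδ.le
      · exact abs_le_of_sq_le_sq (by nlinarith [sq_nonneg (fn n r - f r)]) hδ.le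
    have hRτ : (R : EReal) < τ n := by
      by_contra hcon
      rw [not_lt] at hcon
      rcases hmax n with htop | ⟨htop, hblow⟩
      · rw [htop, top_le_iff] at hcon
        exact EReal.coe_ne_top R hcon
      · have hbot : τ n ≠ ⊥ := ((bot_le).trans_lt (hτpos n)).ne'
        have hcoe : (((τ n).toReal : ℝ) : EReal) = τ n := EReal.coe_toReal htop hbot
        generalize (τ n).toReal = t at hblow hcoe
        have htpos : 0 < t := by
          have := hτpos n
          rw [← hcoe] at this
          exact_mod_cast this
        have htR : t ≤ R := by
          rw [← hcoe] at hcon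
          exact_mod_cast hcon
        have hnear : ∀ᶠ r in nhdsWithin t (Set.Iio t), 0 < r ∧ r < t :=
          Ioo_mem_nhdsLT htpos
        obtain ⟨r, hbig, hr0, hrt⟩ :=
          ((hblow.eventually_gt_atTop (2 * M)).and hnear).exists
        have hrR : r ≤ R := hrt.le.trans htR
        obtain ⟨h1, h2⟩ := close r hr0.le hrR (by rw [← hcoe]; exact_mod_cast hrt)
        have hf := hfM r ⟨hr0.le, hrR⟩
        have hg := hgM r ⟨hr0.le, hrR⟩
        have h3 := abs_add_le (fn n r - f r) (f r)
        have h4 := abs_add_le (gn n r - g r) (g r)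
        rw [sub_add_cancel] at h3 h4
        linarith
    refine ⟨hRτ, fun r hr => ?_⟩
    obtain ⟨h1, h2⟩ := close r hr.1 hr.2 ((EReal.coe_le_coe_iff.2 hr.2).trans_lt hRτ)
    exact ⟨h1.trans_lt hδε, h2.trans_lt hδε⟩
  refine ⟨fun M => ?_, fun R hR => ?_⟩
  · filter_upwards [main (max M 1) (by positivity) 1 one_pos] with n hn
    exact (EReal.coe_le_coe_iff.2 (le_max_left M 1)).trans_lt hn.1
  · rw [Metric.tendstoUniformlyOn_iff]
    intro ε hε
    filter_upwards [main R hR ε hε] with n hn r hr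
    rw [dist_comm, Prod.dist_eq, Real.dist_eq, Real.dist_eq]
    exact max_lt (hn.2 r hr).1 (hn.2 r hr).2
end

section
/- Let a, b > 0 with a - 2b > 0, let x ∈ ℝ with x^2 < 1, and let (f_x, g_x) be the solution of the radial system on its maximal interval [0, R_x) with f_x(0) = 0 and g_x(0) = x. Then g_x(r)^2 < 1 and f_x(r)^2 < a - b for all r ∈ [0, R_x), R_x = +∞, and (f_x(r), g_x(r)) ∈ A for all r ∈ [0, +∞), where A = {(f₀, g₀) ∈ ℝ^2 : 2 f₀^2 - a g₀^2 - (a - 2b) ≤ 0 and g₀^2 ≤ 1}. -/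
/-!
The line `g² = 1` is invariant, because `u = 1 - g²` solves the linear equation
`u' = -2 f g u` with a coefficient that is bounded on compact intervals; hence `u` never vanishes
and keeps its initial positive sign (`one_sub_sq_pos`).

The energy `H = f² (1 - g²) / 2 + a g⁴ / 4 - b g² / 2` satisfies `H' = -2 f² (1 - g²) / r ≤ 0`
(`energy_le`). It starts at `a x⁴ / 4 - b x² / 2`, which lies strictly below the value
`(a - 2 b) / 4` at `x² = 1`: with `s = x²`, the difference is `(1 - s) (a (1 + s) - 2 b) / 4 > 0`.
The same factorization, applied to `H(r) < (a - 2 b) / 4` and divided by `1 - g² > 0`, turns the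
energy bound into `2 f² < a g² + (a - 2 b)`, that is, into membership in the admissible set; with
`g² < 1` this also gives `f² < a - b`. Boundedness of `(f, g)` then excludes blow-up at a finite
`R`.
-/

/-- The strip `g² < 1` is invariant under `g' = f (1 - g²)`. -/
lemma one_sub_sq_pos {f g : ℝ → ℝ} {T : ℝ} (hT : 0 ≤ T)
    (hf : ContinuousOn f (Set.Icc 0 T)) (hg : ContinuousOn g (Set.Icc 0 T))
    (h0 : g 0 ^ 2 < 1)
    (hd : ∀ t ∈ Set.Ioo 0 T, HasDerivAt g (f t * (1 - g t ^ 2)) t) :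
    0 < 1 - g T ^ 2 := by
  obtain ⟨M, hM⟩ := isCompact_Icc.exists_bound_of_continuousOn (hf.mul hg)
  -- The square of `u = 1 - g²`, weighted by `exp (4 M t)` with `|f g| ≤ M`, is nondecreasing,
  -- so `u` cannot reach zero.
  have hmono : MonotoneOn (fun t => (1 - g t ^ 2) ^ 2 * Real.exp (4 * M * t)) (Set.Icc 0 T) := by
    apply monotoneOn_of_hasDerivWithinAt_nonneg (convex_Icc 0 T)
      (f' := fun t => 4 * (M - f t * g t) * (1 - g t ^ 2) ^ 2 * Real.exp (4 * M * t))
    · fun_prop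
    · intro t ht
      rw [interior_Icc] at ht
      have hE : HasDerivAt (fun t => Real.exp (4 * M * t)) (Real.exp (4 * M * t) * (4 * M)) t := by
        simpa using ((hasDerivAt_id t).const_mul (4 * M)).exp
      have := ((((hd t ht).pow 2).const_sub 1).pow 2).mul hE
      refine (this.congr_deriv ?_).hasDerivWithinAt
      simp
      ring
    · intro t ht
      rw [interior_Icc] at ht
      have h := (abs_le.mp (hM t (Set.Ioo_subset_Icc_self ht))).2
      have h' : 0 ≤ M - f t * g t := sub_nonneg.mpr h
      positivity
  have hne : ∀ t ∈ Set.Icc 0 T, 1 - g t ^ 2 ≠ 0 := by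
    intro t ht hz
    have h := hmono (Set.left_mem_Icc.mpr hT) ht ht.1
    simp only [hz] at h
    have hp : 0 < (1 - g 0 ^ 2) ^ 2 := pow_pos (by linarith) 2
    norm_num at h
    linarith
  by_contra hneg
  have hc : ContinuousOn (fun t => 1 - g t ^ 2) (Set.Icc 0 T) := by fun_prop
  obtain ⟨t, ht, hz⟩ := intermediate_value_Icc' hT hc
    (show (0 : ℝ) ∈ Set.Icc (1 - g T ^ 2) (1 - g 0 ^ 2) from ⟨not_lt.mp hneg, by linarith⟩)
  exact hne t ht hz

/-- The energy `f² (1 - g²) / 2 + a g⁴ / 4 - b g² / 2` does not exceed its initial value while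
the solution stays in the strip `g² ≤ 1`. -/
lemma energy_le {a b : ℝ} {f g : ℝ → ℝ} {T : ℝ} (hT : 0 ≤ T)
    (hf : ContinuousOn f (Set.Icc 0 T)) (hg : ContinuousOn g (Set.Icc 0 T))
    (hu : ∀ t ∈ Set.Icc 0 T, 0 ≤ 1 - g t ^ 2)
    (hdf : ∀ t ∈ Set.Ioo 0 T,
      HasDerivAt f (g t * (f t ^ 2 - a * g t ^ 2 + b) - 2 / t * f t) t)
    (hdg : ∀ t ∈ Set.Ioo 0 T, HasDerivAt g (f t * (1 - g t ^ 2)) t) :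
    f T ^ 2 * (1 - g T ^ 2) / 2 + a * g T ^ 4 / 4 - b * g T ^ 2 / 2 ≤
      f 0 ^ 2 * (1 - g 0 ^ 2) / 2 + a * g 0 ^ 4 / 4 - b * g 0 ^ 2 / 2 := by
  have hanti : AntitoneOn
      (fun t => f t ^ 2 * (1 - g t ^ 2) / 2 + a * g t ^ 4 / 4 - b * g t ^ 2 / 2)
      (Set.Icc 0 T) := by
    apply antitoneOn_of_hasDerivWithinAt_nonpos (convex_Icc 0 T)
      (f' := fun t => -(2 / t * f t ^ 2 * (1 - g t ^ 2)))
    · fun_prop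
    · intro t ht
      rw [interior_Icc] at ht
      have hF := hdf t ht
      have hG := hdg t ht
      have := (((((hF.pow 2).mul ((hG.pow 2).const_sub 1)).div_const 2).add
        (((hG.pow 4).const_mul a).div_const 4)).sub (((hG.pow 2).const_mul b).div_const 2))
      refine (this.congr_deriv ?_).hasDerivWithinAt
      simp
      ring
    · intro t ht
      rw [interior_Icc] at ht
      have h1 := hu t (Set.Ioo_subset_Icc_self ht)
      have h2 : 0 < t := ht.1
      have : 0 ≤ 2 / t * f t ^ 2 * (1 - g t ^ 2) := by positivity
      linarith
  exact hanti (Set.left_mem_Icc.mpr hT) (Set.right_mem_Icc.mpr hT) hT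


/-- For `a, b > 0` with `a - 2b > 0` and `x² < 1`, the maximal solution of
the radial system on `[0, R)` with `f 0 = 0`, `g 0 = x` satisfies `g r ² < 1` and
`f r ² < a - b` on `[0, R)`, the maximal time is `R = ∞`, and the solution stays in the
admissible set `A = {(f₀, g₀) : 2 f₀² - a g₀² - (a - 2b) ≤ 0, g₀² ≤ 1}` for all `r ≥ 0`.
Maximality is expressed by the blow-up alternative. -/
theorem radial_system_global_and_admissible
    (a b : ℝ) (ha : 0 < a) (hb : 0 < b) (hab : 0 < a - 2 * b)
    (x : ℝ) (hx : x ^ 2 < 1)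
    (R : EReal) (hR : 0 < R) (f g : ℝ → ℝ)
    (hfc : ContinuousOn f {r : ℝ | 0 ≤ r ∧ (r : EReal) < R})
    (hgc : ContinuousOn g {r : ℝ | 0 ≤ r ∧ (r : EReal) < R})
    (hf0 : f 0 = 0) (hg0 : g 0 = x)
    (hode : ∀ r : ℝ, 0 < r → (r : EReal) < R →
      HasDerivAt f (g r * ((f r) ^ 2 - a * (g r) ^ 2 + b) - 2 / r * f r) r ∧
      HasDerivAt g (f r * (1 - (g r) ^ 2)) r)
    (hmax : R = ⊤ ∨ (R ≠ ⊤ ∧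
      Filter.Tendsto (fun r => |f r| + |g r|)
        (nhdsWithin R.toReal (Set.Iio R.toReal)) Filter.atTop)) :
    (∀ r : ℝ, 0 ≤ r → (r : EReal) < R → (g r) ^ 2 < 1 ∧ (f r) ^ 2 < a - b) ∧
    R = ⊤ ∧
    (∀ r : ℝ, 0 ≤ r →
      2 * (f r) ^ 2 - a * (g r) ^ 2 - (a - 2 * b) ≤ 0 ∧ (g r) ^ 2 ≤ 1) := by
  have key : ∀ r : ℝ, 0 ≤ r → (r : EReal) < R →
      (g r) ^ 2 < 1 ∧ 2 * (f r) ^ 2 - a * (g r) ^ 2 - (a - 2 * b) < 0 := by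
    intro r hr hrR
    have hlt : ∀ t : ℝ, t ≤ r → (t : EReal) < R := fun t ht =>
      lt_of_le_of_lt (EReal.coe_le_coe_iff.mpr ht) hrR
    have hsub : ∀ t ≤ r, Set.Icc 0 t ⊆ {r : ℝ | 0 ≤ r ∧ (r : EReal) < R} := fun t ht s hs =>
      ⟨hs.1, hlt s (hs.2.trans ht)⟩
    have hu : ∀ t ∈ Set.Icc 0 r, 0 < 1 - g t ^ 2 := fun t ht =>
      one_sub_sq_pos ht.1 (hfc.mono (hsub t ht.2)) (hgc.mono (hsub t ht.2)) (by rwa [hg0])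
        fun s hs => (hode s hs.1 (hlt s (hs.2.le.trans ht.2))).2
    have hE := energy_le (a := a) (b := b) hr (hfc.mono (hsub r le_rfl)) (hgc.mono (hsub r le_rfl))
      (fun t ht => (hu t ht).le) (fun s hs => (hode s hs.1 (hlt s hs.2.le)).1)
      (fun s hs => (hode s hs.1 (hlt s hs.2.le)).2)
    have hur := hu r ⟨hr, le_rfl⟩
    rw [hf0, hg0] at hE
    have hinit : 0 < (1 - x ^ 2) * (a * (1 + x ^ 2) - 2 * b) :=
      mul_pos (by linarith) (by nlinarith [mul_nonneg ha.le (sq_nonneg x)])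
    have hprod : (1 - g r ^ 2) * (2 * (f r) ^ 2 - a * (g r) ^ 2 - (a - 2 * b)) < 0 := by
      linear_combination 4 * hE + hinit
    exact ⟨by linarith, (pos_iff_neg_of_mul_neg hprod).mp hur⟩
  have bound : ∀ r : ℝ, 0 ≤ r → (r : EReal) < R → (g r) ^ 2 < 1 ∧ (f r) ^ 2 < a - b := by
    intro r hr hrR
    obtain ⟨h1, h2⟩ := key r hr hrR
    exact ⟨h1, by nlinarith⟩
  have hRtop : R = ⊤ := by
    rcases hmax with h | ⟨hne, hlim⟩
    · exact h
    exfalso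
    lift R to ℝ using ⟨hne, (bot_lt_of_lt hR).ne'⟩
    rw [EReal.toReal_coe] at hlim
    have hR' : (0 : ℝ) < R := by exact_mod_cast hR
    have hev := hlim.eventually_gt_atTop (a - b + 1 + 1)
    obtain ⟨r, hbig, hr⟩ := (hev.and (Ioo_mem_nhdsLT hR')).exists
    obtain ⟨h1, h2⟩ := bound r hr.1.le (by exact_mod_cast hr.2)
    have hg1 : |g r| < 1 := (sq_lt_one_iff_abs_lt_one _).mp h1
    -- `|f| ≤ f² + 1 < a - b + 1`.
    have hf1 : |f r| < a - b + 1 := by nlinarith [sq_abs (f r), sq_nonneg (|f r| - 1 / 2)]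
    linarith
  refine ⟨bound, hRtop, fun r hr => ?_⟩
  obtain ⟨h1, h2⟩ := key r hr (hRtop ▸ EReal.coe_lt_top r)
  exact ⟨h2.le, h1.le⟩
end

section
/- Let a, b > 0 with a - 2b > 0, let 0 < x < 1, and let (f_x, g_x) be the solution of the radial system on [0,∞) with f_x(0) = 0, g_x(0) = x. Assume f_x(r) < 0 and g_x(r) > 0 for all r ∈ (0, +∞). Then there exists a constant C > 0 such that for all r ≥ 0: 0 ≤ -f_x(r) ≤ C exp(-K r) and 0 ≤ g_x(r) ≤ C exp(-K r), where K = min{b/2, (2a - b)/(2a)}. -/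
/-!
Write `F = -f > 0`. Since `g' = -F (1 - g²)`, a barrier argument keeps `g` below a constant
`y < 1`, so `g` decreases strictly to a limit `ℓ ≥ 0`.

Once `g² ≤ b / (2a)`, the system gives
`(F + g)' ≤ -b g - F + a g³ + F g² ≤ -(b/2) g - (1 - b/(2a)) F ≤ -K (F + g)`,
so `(F + g) e^{K r}` is nonincreasing and the decay follows, with compactness on the remaining
bounded interval.

It remains to see that `g² ≤ b / (2a)` eventually, for which it suffices that `ℓ = 0`
(`limit_sq_lt`).
* If `0 < ℓ` and `ℓ² < b/a`, then eventually `F' ≤ g (a g² - b)` is bounded above by a negative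
  constant, contradicting `F > 0` (`limit_not_below`).
* If `0 < ℓ` and `ℓ² ≥ b/a`, then `w = F / (g - ℓ)` is positive and satisfies a Riccati
  inequality `w' ≥ c (1 + w²)` eventually. So `arctan w` grows at least linearly, which is
  impossible (`limit_not_above`). This reflects the oscillation of the linearised system about the
  equilibrium `f = 0`, `g² = b/a`.
-/

open Set

lemma growth_of_deriv_ge {φ φ' : ℝ → ℝ} {R δ : ℝ}
    (h : ∀ r, R ≤ r → HasDerivAt φ (φ' r) r) (hδ : ∀ r, R ≤ r → δ ≤ φ' r) :
    ∀ r s, R ≤ r → r ≤ s → δ * (s - r) ≤ φ s - φ r := by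
  intro r s hr hrs
  refine (convex_Ici R).mul_sub_le_image_sub_of_le_deriv (f := φ)
    (fun t ht => (h t ht).continuousAt.continuousWithinAt) ?_ ?_ r hr s (hr.trans hrs) hrs
  · intro t ht
    exact (h t (interior_subset ht)).differentiableAt.differentiableWithinAt
  · intro t ht
    rw [(h t (interior_subset ht)).deriv]
    exact hδ t (interior_subset ht)

lemma false_of_bounded_of_deriv_ge {φ φ' : ℝ → ℝ} {R δ M : ℝ} (hpos : 0 < δ)
    (h : ∀ r, R ≤ r → HasDerivAt φ (φ' r) r) (hδ : ∀ r, R ≤ r → δ ≤ φ' r)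
    (hM : ∀ r, R ≤ r → φ r ≤ M) : False := by
  have h0 : φ R ≤ M := hM R le_rfl
  have hs : R ≤ R + ((M - φ R) / δ + 1) := by
    have : 0 ≤ (M - φ R) / δ := div_nonneg (by linarith) hpos.le
    linarith
  have h1 := growth_of_deriv_ge h hδ R _ le_rfl hs
  have h2 := hM _ hs
  have h3 : δ * (R + ((M - φ R) / δ + 1) - R) = M - φ R + δ := by
    field_simp
    ring
  linarith

/-- The limit of `g` cannot lie strictly between `0` and `√(b/a)`: otherwise `F = -f` would
decrease at least linearly. -/
lemma limit_not_below {a b ℓ : ℝ} {F g : ℝ → ℝ} (ha : 0 < a)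
    (hF : ∀ r, 0 < r → HasDerivAt F (g r * (a * g r ^ 2 - b - F r ^ 2) - 2 / r * F r) r)
    (hFpos : ∀ r, 0 < r → 0 < F r) (hℓ : 0 < ℓ) (hgℓ : ∀ r, 0 < r → ℓ < g r)
    (hlim : ∀ m, ℓ < m → ∃ R, 0 < R ∧ ∀ r, R ≤ r → g r < m) (hlt : a * ℓ ^ 2 < b) : False := by
  -- `m` is chosen between `ℓ` and `√(b/a)`.
  obtain ⟨m, hm1, hm2⟩ : ∃ m, ℓ < m ∧ a * m ^ 2 < b := by
    have hs : ℓ < √(b / a) := by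
      apply Real.lt_sqrt_of_sq_lt
      rw [lt_div_iff₀ ha]; linarith
    obtain ⟨m, h1, h2⟩ := exists_between hs
    refine ⟨m, h1, ?_⟩
    have := (Real.lt_sqrt (hℓ.trans h1).le).1 h2
    rw [lt_div_iff₀ ha] at this
    linarith
  obtain ⟨R, hR, hRg⟩ := hlim m hm1
  refine false_of_bounded_of_deriv_ge (φ := fun r => -F r) (R := R) (δ := ℓ * (b - a * m ^ 2))
    (M := 0) (mul_pos hℓ (by linarith)) (fun r hr => (hF r (hR.trans_le hr)).neg) ?_ ?_
  · intro r hr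
    have hr0 := hR.trans_le hr
    have h1 := hgℓ r hr0
    have h2 := hRg r hr
    have h3 : 0 ≤ 2 / r * F r := mul_nonneg (by positivity) (hFpos r hr0).le
    have h4 : a * g r ^ 2 ≤ a * m ^ 2 := by
      have : 0 < g r := hℓ.trans h1
      gcongr
    have h5 : ℓ * (b - a * m ^ 2) ≤ g r * (b - a * g r ^ 2 + F r ^ 2) := by
      apply mul_le_mul h1.le _ (by linarith) (by linarith)
      nlinarith [sq_nonneg (F r)]
    linarith
  · intro r hr
    have := hFpos r (hR.trans_le hr)
    linarith

/-- The limit of `g` cannot be at least `√(b/a)`: otherwise the quotient `w = F / (g - ℓ)` would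
satisfy `w' ≥ c (1 + w²)` near infinity. -/
lemma limit_not_above {a b ℓ y : ℝ} {F g : ℝ → ℝ} (ha : 0 < a) (hy : y < 1)
    (hF : ∀ r, 0 < r → HasDerivAt F (g r * (a * g r ^ 2 - b - F r ^ 2) - 2 / r * F r) r)
    (hg : ∀ r, 0 < r → HasDerivAt g (-(F r * (1 - g r ^ 2))) r)
    (hFpos : ∀ r, 0 < r → 0 < F r) (hgy : ∀ r, 0 < r → g r ≤ y)
    (hℓ : 0 < ℓ) (hgℓ : ∀ r, 0 < r → ℓ < g r)
    (hlim : ∀ m, ℓ < m → ∃ R, 0 < R ∧ ∀ r, R ≤ r → g r < m) (hge : b ≤ a * ℓ ^ 2) : False := by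
  have hy0 : 0 < y := hℓ.trans ((hgℓ 1 one_pos).trans_le (hgy 1 one_pos))
  obtain ⟨d, hd⟩ : ∃ d, d = 1 - y ^ 2 := ⟨_, rfl⟩
  have hdpos : 0 < d := by nlinarith
  -- The Riccati inequality holds with constant `2c` without the damping term `2 F / r`, which
  -- costs at most `c` for `r ≥ 1 / c`.
  obtain ⟨c, hc, hc1, hc2⟩ : ∃ c, 0 < c ∧ 2 * c ≤ 2 * a * ℓ ^ 2 ∧ 2 * c ≤ 3 / 4 * d := by
    refine ⟨min (2 * a * ℓ ^ 2) (3 / 4 * d) / 2, by positivity, ?_, ?_⟩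
    · linarith [min_le_left (2 * a * ℓ ^ 2) (3 / 4 * d)]
    · linarith [min_le_right (2 * a * ℓ ^ 2) (3 / 4 * d)]
  obtain ⟨R, hR, hRg⟩ := hlim (ℓ + d / 4) (by linarith)
  have hS : ∀ r, max R (1 / c) ≤ r → 0 < r := fun r hr => hR.trans_le ((le_max_left _ _).trans hr)
  refine false_of_bounded_of_deriv_ge (φ := fun r => Real.arctan (F r / (g r - ℓ)))
    (R := max R (1 / c)) (δ := c) (M := Real.pi / 2) hc
    (fun r hr => (((hF r (hS r hr)).div ((hg r (hS r hr)).sub_const ℓ)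
      (sub_pos.2 (hgℓ r (hS r hr))).ne').arctan)) ?_ (fun r _ => (Real.arctan_lt_pi_div_two _).le)
  intro r hr
  have hr0 := hS r hr
  have hFr := hFpos r hr0
  have hgl := hgℓ r hr0
  have hgyr := hgy r hr0
  have hgR := hRg r ((le_max_left _ _).trans hr)
  have hcr : 1 / r ≤ c := by
    rw [div_le_iff₀ hr0]
    have := (le_max_right R (1 / c)).trans hr
    rw [div_le_iff₀ hc] at this
    linarith
  obtain ⟨u, hu⟩ : ∃ u, u = g r - ℓ := ⟨_, rfl⟩
  have hu0 : 0 < u := by linarith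
  have hg1 : g r ≤ 1 := by linarith
  have hg0 : 0 < g r := hℓ.trans hgl
  rw [Pi.div_apply, ← hu]
  -- The damping term, by `2 F u ≤ F² + u²` and `1 / r ≤ c`.
  have k1 : 2 / r * F r * u ≤ c * (F r ^ 2 + u ^ 2) := by
    have : 2 / r * F r * u = 1 / r * (2 * F r * u) := by ring
    rw [this]
    apply mul_le_mul hcr _ (by positivity) hc.le
    nlinarith [sq_nonneg (F r - u)]
  -- The restoring force, by `a g² - b ≥ a (g² - ℓ²)`.
  have k2 : 2 * c * u ^ 2 ≤ g r * (a * g r ^ 2 - b) * u := by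
    have e1 : 2 * a * ℓ * u ≤ a * g r ^ 2 - b := by
      have : g r = u + ℓ := by linarith
      rw [this]; nlinarith [mul_pos ha (pow_pos hu0 2)]
    have e2 : ℓ * (2 * a * ℓ * u) ≤ g r * (a * g r ^ 2 - b) :=
      mul_le_mul hgl.le e1 (by positivity) hg0.le
    nlinarith [mul_le_mul_of_nonneg_right e2 hu0.le,
      mul_le_mul_of_nonneg_right hc1 (sq_nonneg u)]
  have k3 : 2 * c * F r ^ 2 ≤ F r ^ 2 * (1 - g r ^ 2) - g r * F r ^ 2 * u := by
    have e1 : g r ^ 2 ≤ y ^ 2 := by gcongr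
    have e2 : g r * u ≤ 1 * (d / 4) := mul_le_mul hg1 (by linarith) hu0.le (by norm_num)
    have e3 : 2 * c ≤ 1 - g r ^ 2 - g r * u := by linarith
    nlinarith [mul_le_mul_of_nonneg_right e3 (sq_nonneg (F r))]
  have hden : 1 / (1 + (F r / u) ^ 2) = u ^ 2 / (u ^ 2 + F r ^ 2) := by
    field_simp
  rw [hden, div_mul_div_cancel₀' (by positivity), le_div_iff₀ (by positivity)]
  nlinarith

/-- Both possibilities for a positive limit `ℓ` of `g` being excluded, `ℓ = 0`; only the weaker
bound needed for the decay estimate is recorded. -/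
lemma limit_sq_lt {a b ℓ y : ℝ} {F g : ℝ → ℝ} (ha : 0 < a) (hb : 0 < b) (hy : y < 1)
    (hF : ∀ r, 0 < r → HasDerivAt F (g r * (a * g r ^ 2 - b - F r ^ 2) - 2 / r * F r) r)
    (hg : ∀ r, 0 < r → HasDerivAt g (-(F r * (1 - g r ^ 2))) r)
    (hFpos : ∀ r, 0 < r → 0 < F r) (hgy : ∀ r, 0 < r → g r ≤ y)
    (hℓ : 0 ≤ ℓ) (hgℓ : ∀ r, 0 < r → ℓ < g r)
    (hlim : ∀ m, ℓ < m → ∃ R, 0 < R ∧ ∀ r, R ≤ r → g r < m) : a * ℓ ^ 2 < b / 2 := by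
  rcases hℓ.eq_or_lt with h | h
  · rw [← h]; simpa using hb
  · rcases lt_or_ge (a * ℓ ^ 2) b with h1 | h1
    · exact (limit_not_below ha hF hFpos h hgℓ hlim h1).elim
    · exact (limit_not_above ha hy hF hg hFpos hgy h hgℓ hlim h1).elim

/-- Barrier argument: `g` cannot cross a level `y ∈ (x, 1)`, because its derivative is negative
there. The level is taken above `x = g 0` since the equation is not imposed at `r = 0`. -/
lemma barrier {F g : ℝ → ℝ} {x y : ℝ} (hgc : ContinuousOn g (Ici 0)) (hg0 : g 0 = x)
    (hx0 : 0 < x) (hxy : x < y) (hy : y < 1)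
    (hg : ∀ r, 0 < r → HasDerivAt g (-(F r * (1 - g r ^ 2))) r)
    (hFpos : ∀ r, 0 < r → 0 < F r) : ∀ r, 0 < r → g r ≤ y := by
  have h0 : ∀ᶠ r in nhdsWithin 0 (Ici (0 : ℝ)), g r < y :=
    (hgc 0 self_mem_Ici).eventually (gt_mem_nhds (by rw [hg0]; exact hxy))
  rw [Filter.Eventually, mem_nhdsGE_iff_exists_Ico_subset] at h0
  obtain ⟨s, hs, hsub⟩ := h0
  have hs : 0 < s := hs
  intro r hr
  rcases lt_or_ge r s with h | h
  · exact (hsub ⟨hr.le, h⟩).le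
  have hpos : ∀ t ∈ Ico (s / 2) r, 0 < t := fun t ht => (half_pos hs).trans_le ht.1
  refine image_le_of_deriv_right_lt_deriv_boundary (f := g) (a := s / 2) (b := r)
    (f' := fun r => -(F r * (1 - g r ^ 2))) (B := fun _ => y) (B' := fun _ => 0)
    (hgc.mono fun t ht => (half_pos hs).le.trans ht.1)
    (fun t ht => (hg t (hpos t ht)).hasDerivWithinAt)
    (hsub ⟨(half_pos hs).le, half_lt_self hs⟩).le (fun t => hasDerivAt_const t y) ?_
    ⟨(half_le_self hs.le).trans h, le_rfl⟩
  intro t ht hty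
  have : 0 < F t * (1 - g t ^ 2) := mul_pos (hFpos t (hpos t ht)) (by rw [hty]; nlinarith)
  simpa using this

/-- Once `g² ≤ b / (2a)`, the sum `F + g` satisfies `(F + g)' ≤ -K (F + g)`. -/
lemma decay_rate {a b K F g r : ℝ} (ha : 0 < a) (hr : 0 < r) (hF : 0 < F) (hg : 0 < g)
    (hK1 : K ≤ b / 2) (hK2 : K ≤ (2 * a - b) / (2 * a)) (hgs : a * g ^ 2 ≤ b / 2) :
    (g * (a * g ^ 2 - b - F ^ 2) - 2 / r * F) + -(F * (1 - g ^ 2)) ≤ -K * (F + g) := by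
  have h1 : g ^ 2 ≤ 1 - K := by
    rw [le_div_iff₀ (by positivity)] at hK2
    nlinarith
  have h2 : 0 ≤ 2 / r * F := by positivity
  nlinarith [mul_le_mul_of_nonneg_left h1 hF.le, mul_le_mul_of_nonneg_left hgs hg.le,
    mul_le_mul_of_nonneg_left hK1 hg.le, mul_nonneg hg.le (sq_nonneg F)]

/-- For `a, b > 0` with `a - 2b > 0` and `0 < x < 1`, if the (global)
solution of the radial system with `f 0 = 0`, `g 0 = x` satisfies `f r < 0` and
`g r > 0` on `(0, ∞)`, then there is `C > 0` with
`0 ≤ -f r ≤ C exp (-K r)` and `0 ≤ g r ≤ C exp (-K r)` for all `r ≥ 0`,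
where `K = min (b/2) ((2a - b)/(2a))`. -/
theorem radial_system_exponential_decay
    (a b : ℝ) (ha : 0 < a) (hb : 0 < b) (hab : 0 < a - 2 * b)
    (x : ℝ) (hx0 : 0 < x) (hx1 : x < 1)
    (f g : ℝ → ℝ)
    (hfc : ContinuousOn f (Set.Ici 0)) (hgc : ContinuousOn g (Set.Ici 0))
    (hf0 : f 0 = 0) (hg0 : g 0 = x)
    (hode : ∀ r : ℝ, 0 < r →
      HasDerivAt f (g r * ((f r) ^ 2 - a * (g r) ^ 2 + b) - 2 / r * f r) r ∧
      HasDerivAt g (f r * (1 - (g r) ^ 2)) r)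
    (hsign : ∀ r : ℝ, 0 < r → f r < 0 ∧ 0 < g r) :
    ∃ C : ℝ, 0 < C ∧ ∀ r : ℝ, 0 ≤ r →
      0 ≤ -f r ∧ -f r ≤ C * Real.exp (-(min (b / 2) ((2 * a - b) / (2 * a))) * r) ∧
      0 ≤ g r ∧ g r ≤ C * Real.exp (-(min (b / 2) ((2 * a - b) / (2 * a))) * r) := by
  have hFc : ContinuousOn (fun r => -f r) (Ici 0) := hfc.neg
  have hF : ∀ r, 0 < r → HasDerivAt (fun r => -f r)
      (g r * (a * g r ^ 2 - b - (-f r) ^ 2) - 2 / r * (-f r)) r := fun r hr => by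
    exact (hode r hr).1.fun_neg.congr_deriv (by ring)
  have hg : ∀ r, 0 < r → HasDerivAt g (-(-f r * (1 - g r ^ 2))) r := fun r hr => by
    convert (hode r hr).2 using 1
    ring
  have hFpos : ∀ r, 0 < r → 0 < -f r := fun r hr => neg_pos.2 (hsign r hr).1
  have hgpos : ∀ r, 0 < r → 0 < g r := fun r hr => (hsign r hr).2
  obtain ⟨y, hxy, hy⟩ := exists_between hx1
  have hgy := barrier (F := fun r => -f r) hgc hg0 hx0 hxy hy hg hFpos
  have hanti : StrictAntiOn g (Ioi 0) := by
    refine strictAntiOn_of_deriv_neg (convex_Ioi 0)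
      (hgc.mono Ioi_subset_Ici_self) fun r hr => ?_
    have hr : 0 < r := interior_subset hr
    rw [(hg r hr).deriv]
    have h1 := hgpos r hr
    have h2 := hgy r hr
    exact neg_neg_of_pos (mul_pos (hFpos r hr) (by nlinarith))
  have hbdd : BddBelow (g '' Ioi 0) := ⟨0, by rintro _ ⟨r, hr, rfl⟩; exact (hgpos r hr).le⟩
  have hne : (g '' Ioi 0).Nonempty := ⟨g 1, 1, mem_Ioi.2 one_pos, rfl⟩
  -- The limit of `g` at infinity.
  obtain ⟨ℓ, hℓdef⟩ : ∃ ℓ, ℓ = sInf (g '' Ioi 0) := ⟨_, rfl⟩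
  have hℓ : 0 ≤ ℓ := by
    rw [hℓdef]
    exact le_csInf hne (by rintro _ ⟨r, hr, rfl⟩; exact (hgpos r hr).le)
  have hgℓ : ∀ r, 0 < r → ℓ < g r := fun r hr => by
    have hr1 : 0 < r + 1 := by linarith
    have h1 : ℓ ≤ g (r + 1) := hℓdef ▸ csInf_le hbdd ⟨r + 1, hr1, rfl⟩
    exact h1.trans_lt (hanti hr hr1 (lt_add_one r))
  have hlim : ∀ m, ℓ < m → ∃ R, 0 < R ∧ ∀ r, R ≤ r → g r < m := fun m hm => by
    rw [hℓdef] at hm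
    obtain ⟨_, ⟨R, hR, rfl⟩, hRm⟩ := exists_lt_of_csInf_lt hne hm
    have hR : 0 < R := hR
    exact ⟨R, hR, fun r hr => (hanti.antitoneOn hR (hR.trans_le hr) hr).trans_lt hRm⟩
  have hsq := limit_sq_lt ha hb hy hF hg hFpos hgy hℓ hgℓ hlim
  obtain ⟨R, hR, hRg⟩ : ∃ R, 0 < R ∧ ∀ r, R ≤ r → a * g r ^ 2 ≤ b / 2 := by
    have hs : ℓ < √(b / 2 / a) := by
      apply Real.lt_sqrt_of_sq_lt
      rw [lt_div_iff₀ ha]; linarith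
    obtain ⟨R, hR, h⟩ := hlim _ hs
    refine ⟨R, hR, fun r hr => ?_⟩
    have := (Real.lt_sqrt (hgpos r (hR.trans_le hr)).le).1 (h r hr)
    rw [lt_div_iff₀ ha] at this
    linarith
  obtain ⟨K, hK⟩ : ∃ K, K = min (b / 2) ((2 * a - b) / (2 * a)) := ⟨_, rfl⟩
  rw [← hK]
  have hK1 : K ≤ b / 2 := hK ▸ min_le_left _ _
  have hK2 : K ≤ (2 * a - b) / (2 * a) := hK ▸ min_le_right _ _
  have hdecay : ∀ r, R ≤ r →
      (-f r + g r) * Real.exp (K * r) ≤ (-f R + g R) * Real.exp (K * R) := by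
    intro r hr
    have hderiv : ∀ t, R ≤ t → HasDerivAt (fun t => -((-f t + g t) * Real.exp (K * t))) _ t :=
      fun t ht => (((hF t (hR.trans_le ht)).add (hg t (hR.trans_le ht))).mul
        (((hasDerivAt_id t).const_mul K).exp)).neg
    have := growth_of_deriv_ge (δ := 0) hderiv (fun t ht => ?_) R r le_rfl hr
    · linarith
    · have ht0 := hR.trans_le ht
      have := mul_le_mul_of_nonneg_right
        (decay_rate ha ht0 (hFpos t ht0) (hgpos t ht0) hK1 hK2 (hRg t ht))
        (Real.exp_pos (K * t)).le
      simp only [Pi.add_apply, id]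
      linarith
  obtain ⟨C, hC⟩ := isCompact_Icc.bddAbove_image
    (f := fun r => (-f r + g r) * Real.exp (K * r)) (K := Icc 0 R)
    (((hFc.add hgc).mul (by fun_prop)).mono Icc_subset_Ici_self)
  have hC' : ∀ r ∈ Icc 0 R, (-f r + g r) * Real.exp (K * r) ≤ C :=
    fun r hr => hC ⟨r, hr, rfl⟩
  have hall : ∀ r, 0 ≤ r → -f r + g r ≤ C * Real.exp (-K * r) := by
    intro r hr
    have h1 : (-f r + g r) * Real.exp (K * r) ≤ C := by
      rcases le_total r R with h | h
      · exact hC' r ⟨hr, h⟩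
      · exact (hdecay r h).trans (hC' R ⟨hR.le, le_rfl⟩)
    rw [neg_mul, Real.exp_neg, ← div_eq_mul_inv, le_div_iff₀ (Real.exp_pos _)]
    exact h1
  have hnn : ∀ r, 0 ≤ r → 0 ≤ -f r ∧ 0 ≤ g r := by
    intro r hr
    rcases hr.eq_or_lt with h | h
    · rw [← h, hf0, hg0]; simpa using hx0.le
    · exact ⟨(hFpos r h).le, (hgpos r h).le⟩
  refine ⟨C, ?_, fun r hr => ?_⟩
  · have := hall 0 le_rfl
    simp only [hf0, hg0, mul_zero, Real.exp_zero, mul_one, neg_zero, zero_add] at this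
    linarith
  · obtain ⟨h1, h2⟩ := hnn r hr
    have := hall r hr
    exact ⟨h1, by linarith, h2, by linarith⟩
end

section
/- Let a, b > 0 with a - 2b > 0, let x ∈ I, and let r_x ∈ (0, R_x) be such that f_x < 0 and g_x > 0 on (0, r_x) and f_x(r_x) = 0. Then 0 ≤ g_x(r_x) ≤ √(b/a) and H(f_x(r_x), g_x(r_x)) ≤ 0, where H(f,g) = (1/2) f^2 (1 - g^2) + (a/4) g^4 - (b/2) g^2. -/
/-!
At the first zero `rx`, the function `f` is negative on the left and vanishes, so `f' rx ≥ 0`.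
As `f rx = 0`, the first equation reads `f' rx = g rx * (b - a * (g rx) ^ 2)`. By continuity
`g rx ≥ 0`, so either `g rx = 0` or `a * (g rx) ^ 2 ≤ b`; both give `a * (g rx) ^ 2 ≤ b`, hence the
bound on `g rx`. Finally `H (0, g) = g² (a g² - 2 b) / 4 ≤ 0`.
-/

/-- For `a, b > 0` with `a - 2b > 0`, let `x ∈ I` (i.e. `x > √(b/a)` and
the solution `(f, g)` of the radial system with `f 0 = 0`, `g 0 = x` satisfies `f < 0`,
`g > 0` on `(0, r_x)` and `f r_x = 0`).  Then `0 ≤ g r_x ≤ √(b/a)` and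
`H (f r_x, g r_x) ≤ 0`, where `H (f, g) = (1/2) f² (1 - g²) + (a/4) g⁴ - (b/2) g²`. -/
theorem shooting_first_zero_properties
    (a b : ℝ) (ha : 0 < a) (hb : 0 < b) (hab : 0 < a - 2 * b)
    (x : ℝ) (hx : Real.sqrt (b / a) < x)
    (rx : ℝ) (hrx : 0 < rx) (f g : ℝ → ℝ)
    (hfc : ContinuousOn f (Set.Icc 0 rx)) (hgc : ContinuousOn g (Set.Icc 0 rx))
    (hf0 : f 0 = 0) (hg0 : g 0 = x)
    (hode : ∀ r ∈ Set.Ioc (0 : ℝ) rx,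
      HasDerivAt f (g r * ((f r) ^ 2 - a * (g r) ^ 2 + b) - 2 / r * f r) r ∧
      HasDerivAt g (f r * (1 - (g r) ^ 2)) r)
    (hsign : ∀ r ∈ Set.Ioo (0 : ℝ) rx, f r < 0 ∧ 0 < g r)
    (hfrx : f rx = 0) :
    0 ≤ g rx ∧ g rx ≤ Real.sqrt (b / a) ∧
    (1 / 2) * (f rx) ^ 2 * (1 - (g rx) ^ 2) +
      (a / 4) * (g rx) ^ 4 - (b / 2) * (g rx) ^ 2 ≤ 0 := by
  -- `g rx` is a left limit of positive values.
  have hg : 0 ≤ g rx := by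
    have ht : Filter.Tendsto g (nhdsWithin rx (Set.Iio rx)) (nhds (g rx)) :=
      (hode rx ⟨hrx, le_rfl⟩).2.continuousAt.tendsto.mono_left nhdsWithin_le_nhds
    refine ge_of_tendsto ht ?_
    filter_upwards [Ioo_mem_nhdsLT hrx] with r hr
    exact (hsign r hr).2.le
  -- The slopes of `f` between `r < rx` and `rx` are nonnegative, hence so is `f' rx`.
  have hf' : 0 ≤ g rx * ((f rx) ^ 2 - a * (g rx) ^ 2 + b) - 2 / rx * f rx := by
    have ht := (hasDerivWithinAt_iff_tendsto_slope' (s := Set.Iio rx)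
      (by simp)).1 (hode rx ⟨hrx, le_rfl⟩).1.hasDerivWithinAt
    refine ge_of_tendsto ht ?_
    filter_upwards [Ioo_mem_nhdsLT hrx] with r hr
    rw [slope_def_field, hfrx]
    exact div_nonneg_of_nonpos (by linarith [(hsign r hr).1]) (by linarith [hr.2])
  rw [hfrx] at hf' ⊢
  have hag : a * (g rx) ^ 2 ≤ b := by
    rcases hg.eq_or_lt with h | h
    · rw [← h]; simpa using hb.le
    · have h2 : 0 ≤ g rx * (b - a * (g rx) ^ 2) := by linarith
      linarith [nonneg_of_mul_nonneg_right h2 h]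
  refine ⟨hg, Real.le_sqrt_of_sq_le ?_, ?_⟩
  · rw [le_div_iff₀ ha]; linarith
  · nlinarith [mul_nonneg (sq_nonneg (g rx)) (sub_nonneg.2 hag),
      mul_nonneg hb.le (sq_nonneg (g rx))]
end

section
/- Let a, b > 0 with a - 2b > 0, let x ∈ I, and let r_x ∈ (0, R_x) be such that f_x < 0 and g_x > 0 on (0, r_x) and f_x(r_x) = 0. Then for all r ∈ (0, r_x): 0 < -f_x(r) ≤ √(a/2) · g_x(r). -/
/-!
Put `c = √(a/2)` and `h = f + c g`; the claim is `h ≥ 0` on `(0, r_x)`. The function `h` is positive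
at `0` and at `r_x`, and wherever `h = 0`, i.e. `f = -c g`, the system gives
`h' = g (2c/r - (c² - b))`. Since `g > 0`, the sign of `h'` at a zero of `h` is that of
`2c/r - (c² - b)`, which is strictly decreasing in `r`. If `h r < 0`, let `s < r < u` be the zeros of
`h` adjacent to `r`. Then `h' ≤ 0` at `s` and `h' ≥ 0` at `u`, so `2c/s ≤ c² - b ≤ 2c/u`, contradicting
`s < u`.

Positivity of `h` at `r_x` means `g r_x > 0`. Otherwise `f` and `g` would both vanish at `r_x`, which
`radial_nontrivial` excludes by a Grönwall argument for `f² + g²`, run backwards from `r_x`.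
-/

open Set Filter Topology in
/-- At a point where a function starts being negative, it vanishes and its slope is nonpositive. -/
lemma down_crossing {h : ℝ → ℝ} {d s r : ℝ} (hd : HasDerivAt h d s) (hs : 0 ≤ h s) (hsr : s < r)
    (hneg : ∀ t ∈ Ioo s r, h t < 0) : h s = 0 ∧ d ≤ 0 := by
  have hev : ∀ᶠ t in 𝓝[>] s, t ∈ Ioo s r := Ioo_mem_nhdsGT hsr
  constructor
  · refine le_antisymm ?_ hs
    refine le_of_tendsto (hd.continuousAt.tendsto.mono_left nhdsWithin_le_nhds :
      Tendsto h (𝓝[>] s) (𝓝 (h s))) ?_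
    filter_upwards [hev] with t ht using (hneg t ht).le
  · have hsl : Tendsto (slope h s) (𝓝[>] s) (𝓝 d) :=
      hd.tendsto_slope.mono_left (nhdsWithin_mono _ fun t ht => ne_of_gt ht)
    refine le_of_tendsto hsl ?_
    filter_upwards [hev] with t ht
    rw [slope_def_field]
    exact div_nonpos_of_nonpos_of_nonneg (by linarith [hneg t ht]) (by linarith [ht.1])

open Set in
/-- At a point where a function stops being negative, it vanishes and its slope is nonnegative. -/
lemma up_crossing {h : ℝ → ℝ} {d s r : ℝ} (hd : HasDerivAt h d s) (hs : 0 ≤ h s) (hrs : r < s)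
    (hneg : ∀ t ∈ Ioo r s, h t < 0) : h s = 0 ∧ 0 ≤ d := by
  have hd' : HasDerivAt (fun t => h (-t)) (-d) (-s) := by
    have := HasDerivAt.scomp (-s) (g₁ := h) (g₁' := d) (by simpa using hd) (hasDerivAt_neg (-s))
    simpa [Function.comp_def] using this
  have := down_crossing (r := -r) hd' (by simpa using hs) (by linarith)
    (fun t ht => hneg (-t) ⟨by linarith [ht.2], by linarith [ht.1]⟩)
  exact ⟨by simpa using this.1, by linarith [this.2]⟩

open Set in
/-- If `f` and `g` both vanish at `q`, then `g` vanishes at every `p ∈ (0, q)` (as does `f`):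
`E = f² + g²` satisfies `E' ≥ -K E` on `[p, q]` for some constant `K`, so `E(t) exp(K t)` is
nondecreasing there. -/
lemma radial_nontrivial {a b p q : ℝ} {f g : ℝ → ℝ} (hp : 0 < p) (hpq : p < q)
    (hode : ∀ r ∈ Icc p q,
      HasDerivAt f (g r * ((f r) ^ 2 - a * (g r) ^ 2 + b) - 2 / r * f r) r ∧
      HasDerivAt g (f r * (1 - (g r) ^ 2)) r)
    (hf : f q = 0) (hg : g q = 0) : g p = 0 := by
  have hfc : ContinuousOn f (Icc p q) := fun t ht => (hode t ht).1.continuousAt.continuousWithinAt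
  have hgc : ContinuousOn g (Icc p q) := fun t ht => (hode t ht).2.continuousAt.continuousWithinAt
  have hcont : ContinuousOn (fun t => (f t) ^ 2 - a * (g t) ^ 2 + b + 1 - (g t) ^ 2) (Icc p q) := by
    fun_prop
  obtain ⟨M, hM⟩ := isCompact_Icc.exists_bound_of_continuousOn hcont
  set K := M + 4 / p with hK
  have hmono : MonotoneOn (fun t => ((f t) ^ 2 + (g t) ^ 2) * Real.exp (K * t)) (Icc p q) := by
    have hder : ∀ t ∈ Icc p q, HasDerivAt (fun t => ((f t) ^ 2 + (g t) ^ 2) * Real.exp (K * t))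
        ((2 * f t * (g t * ((f t) ^ 2 - a * (g t) ^ 2 + b) - 2 / t * f t)
          + 2 * g t * (f t * (1 - (g t) ^ 2)) + K * ((f t) ^ 2 + (g t) ^ 2)) * Real.exp (K * t))
        t := by
      intro t ht
      have h1 := ((hode t ht).1.pow 2).add ((hode t ht).2.pow 2)
      have h2 := ((hasDerivAt_id t).const_mul K).exp
      refine (h1.mul h2).congr_deriv ?_
      simp
      ring
    refine monotoneOn_of_hasDerivWithinAt_nonneg (convex_Icc p q)
      (fun t ht => (hder t ht).continuousAt.continuousWithinAt)
      (fun t ht => (hder t (interior_subset ht)).hasDerivWithinAt) ?_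
    intro t ht
    have ht := interior_subset ht
    refine mul_nonneg ?_ (Real.exp_pos _).le
    have hb := abs_le.1 (hM t ht)
    set A := (f t) ^ 2 - a * (g t) ^ 2 + b + 1 - (g t) ^ 2 with hA
    have h4 : 2 / t ≤ 2 / p := div_le_div_of_nonneg_left (by norm_num) hp ht.1
    have h5 : 4 / p = 2 * (2 / p) := by ring
    have h6 : 0 ≤ 2 / p := by positivity
    have key : 2 * f t * (g t * ((f t) ^ 2 - a * (g t) ^ 2 + b) - 2 / t * f t)
          + 2 * g t * (f t * (1 - (g t) ^ 2)) + K * ((f t) ^ 2 + (g t) ^ 2)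
        = 2 * (2 / p - 2 / t) * (f t) ^ 2 + 2 * (2 / p) * (g t) ^ 2
          + (M + A) / 2 * (f t + g t) ^ 2 + (M - A) / 2 * (f t - g t) ^ 2 := by
      rw [hK, h5, hA]; ring
    rw [key]
    have i1 : 0 ≤ 2 / p - 2 / t := by linarith
    have i2 : 0 ≤ M + A := by linarith [hb.1]
    have i3 : 0 ≤ M - A := by linarith [hb.2]
    positivity
  have h := hmono (left_mem_Icc.2 hpq.le) (right_mem_Icc.2 hpq.le) hpq.le
  simp only [hf, hg] at h
  have h2 : (f p) ^ 2 + (g p) ^ 2 ≤ 0 := by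
    by_contra hc
    push Not at hc
    have := mul_pos hc (Real.exp_pos (K * p))
    norm_num at h
    linarith
  nlinarith [sq_nonneg (f p), sq_nonneg (g p)]

/-- For `a, b > 0` with `a - 2b > 0`, let `x ∈ I` (i.e. `x > √(b/a)` and
the solution `(f, g)` of the radial system with `f 0 = 0`, `g 0 = x` satisfies `f < 0`,
`g > 0` on `(0, r_x)` and `f r_x = 0`).  Then for all `r ∈ (0, r_x)` one has
`0 < -f r ≤ √(a/2) · g r`. -/
theorem shooting_f_bounded_by_g
    (a b : ℝ) (ha : 0 < a) (hb : 0 < b) (hab : 0 < a - 2 * b)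
    (x : ℝ) (hx : Real.sqrt (b / a) < x)
    (rx : ℝ) (hrx : 0 < rx) (f g : ℝ → ℝ)
    (hfc : ContinuousOn f (Set.Icc 0 rx)) (hgc : ContinuousOn g (Set.Icc 0 rx))
    (hf0 : f 0 = 0) (hg0 : g 0 = x)
    (hode : ∀ r ∈ Set.Ioc (0 : ℝ) rx,
      HasDerivAt f (g r * ((f r) ^ 2 - a * (g r) ^ 2 + b) - 2 / r * f r) r ∧
      HasDerivAt g (f r * (1 - (g r) ^ 2)) r)
    (hsign : ∀ r ∈ Set.Ioo (0 : ℝ) rx, f r < 0 ∧ 0 < g r)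
    (hfrx : f rx = 0) :
    ∀ r ∈ Set.Ioo (0 : ℝ) rx, 0 < -f r ∧ -f r ≤ Real.sqrt (a / 2) * g r := by
  intro r hr
  refine ⟨by linarith [(hsign r hr).1], ?_⟩
  by_contra hcon
  push Not at hcon
  set c := Real.sqrt (a / 2) with hc
  have hc0 : 0 < c := Real.sqrt_pos.2 (by positivity)
  have hc2 : a = 2 * c ^ 2 := by rw [hc, Real.sq_sqrt (by positivity)]; ring
  have hgr := (hsign r hr).2
  have hgrx : 0 < g rx := by
    have h0 : 0 ≤ g rx := by
      refine ge_of_tendsto ((hode rx ⟨hrx, le_rfl⟩).2.continuousAt.tendsto.mono_left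
        (nhdsWithin_le_nhds (s := Set.Iio rx))) ?_
      filter_upwards [Ioo_mem_nhdsLT hrx] with t ht using (hsign t ht).2.le
    refine lt_of_le_of_ne h0 fun h => ?_
    have := radial_nontrivial hr.1 hr.2
      (fun t ht => hode t ⟨hr.1.trans_le ht.1, ht.2⟩) hfrx h.symm
    linarith
  have hgpos : ∀ t ∈ Set.Ioc 0 rx, 0 < g t := by
    intro t ht
    rcases ht.2.lt_or_eq with h | h
    · exact (hsign t ⟨ht.1, h⟩).2
    · rwa [h]
  set h : ℝ → ℝ := fun t => f t + c * g t with hh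
  have hhc : ContinuousOn h (Set.Icc 0 rx) := hfc.add (continuousOn_const.mul hgc)
  have hder : ∀ t ∈ Set.Ioc 0 rx, HasDerivAt h
      (g t * ((f t) ^ 2 - a * (g t) ^ 2 + b) - 2 / t * f t + c * (f t * (1 - (g t) ^ 2))) t :=
    fun t ht => (hode t ht).1.add ((hode t ht).2.const_mul c)
  have hder0 : ∀ t, h t = 0 →
      g t * ((f t) ^ 2 - a * (g t) ^ 2 + b) - 2 / t * f t + c * (f t * (1 - (g t) ^ 2))
        = g t * (2 * c / t - (c ^ 2 - b)) := by
    intro t ht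
    have : f t = -c * g t := by simp only [hh] at ht; linarith
    rw [this, hc2]; ring
  have hrneg : h r < 0 := by simp only [hh]; linarith
  have hx0 : 0 < x := (Real.sqrt_nonneg _).trans_lt hx
  have hh0 : 0 < h 0 := by simp only [hh, hf0, hg0]; positivity
  have hhrx : 0 < h rx := by simp only [hh, hfrx]; positivity
  have hcl : ∀ u v, 0 ≤ u → v ≤ rx → IsCompact (Set.Icc u v ∩ h ⁻¹' Set.Ici 0) := fun u v hu hv =>
    isCompact_Icc.of_isClosed_subset
      ((hhc.mono (Set.Icc_subset_Icc hu hv)).preimage_isClosed_of_isClosed isClosed_Icc isClosed_Ici)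
      Set.inter_subset_left
  -- `s` and `u` are the points nearest to `r`, on its left and on its right, where `h ≥ 0`.
  obtain ⟨s, ⟨hs, hs0⟩, hsmax⟩ := (hcl 0 r le_rfl hr.2.le).exists_isGreatest
    ⟨0, ⟨le_rfl, hr.1.le⟩, hh0.le⟩
  obtain ⟨u, ⟨hu, hu0⟩, humin⟩ := (hcl r rx hr.1.le le_rfl).exists_isLeast
    ⟨rx, ⟨hr.2.le, le_rfl⟩, hhrx.le⟩
  simp only [Set.mem_preimage, Set.mem_Ici] at hs0 hu0
  have hsr : s < r := lt_of_le_of_ne hs.2 fun e => by rw [e] at hs0; linarith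
  have hru : r < u := lt_of_le_of_ne hu.1 fun e => by rw [← e] at hu0; linarith
  have hsneg : ∀ t ∈ Set.Ioo s r, h t < 0 := by
    intro t ht
    by_contra hn
    exact absurd (hsmax ⟨⟨hs.1.trans ht.1.le, ht.2.le⟩, not_lt.1 hn⟩) (not_le.2 ht.1)
  have huneg : ∀ t ∈ Set.Ioo r u, h t < 0 := by
    intro t ht
    by_contra hn
    exact absurd (humin ⟨⟨ht.1.le, ht.2.le.trans hu.2⟩, not_lt.1 hn⟩) (not_le.2 ht.2)
  have hspos : 0 < s := by
    refine lt_of_le_of_ne hs.1 fun e => ?_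
    -- The system is singular at `0`, so only continuity of `h` is available there.
    have hcw : Filter.Tendsto h (nhdsWithin 0 (Set.Ioo 0 rx)) (nhds (h 0)) :=
      ((hhc 0 ⟨le_rfl, hrx.le⟩).mono Set.Ioo_subset_Icc_self)
    rw [nhdsWithin_Ioo_eq_nhdsGT hrx] at hcw
    have hle : h 0 ≤ 0 := by
      refine le_of_tendsto hcw ?_
      filter_upwards [Ioo_mem_nhdsGT hr.1] with t ht using (hsneg t (e ▸ ht)).le
    linarith
  have hsI : s ∈ Set.Ioc 0 rx := ⟨hspos, hsr.le.trans hr.2.le⟩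
  have huI : u ∈ Set.Ioc 0 rx := ⟨hr.1.trans hru, hu.2⟩
  obtain ⟨es, ds⟩ := down_crossing (hder s hsI) hs0 hsr hsneg
  obtain ⟨eu, du⟩ := up_crossing (hder u huI) hu0 hru huneg
  rw [hder0 s es] at ds
  rw [hder0 u eu] at du
  have h1 : 2 * c / s - (c ^ 2 - b) ≤ 0 := nonpos_of_mul_nonpos_right ds (hgpos s hsI)
  have h2 : 0 ≤ 2 * c / u - (c ^ 2 - b) := nonneg_of_mul_nonneg_right du (hgpos u huI)
  have h3 : 2 * c / u < 2 * c / s :=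
    div_lt_div_of_pos_left (by positivity) hspos (hsr.trans hru)
  linarith
end

section
/- Let a, b > 0 with a - 2b > 0, and let I = {x > √(b/a) : there exists r_x ∈ (0, R_x) such that f_x(r) < 0 and g_x(r) > 0 for all r ∈ (0, r_x), and f_x(r_x) = 0}. Then sup I < 1. -/
/-!
The argument rests on the energy `H = (1 - g²) f² + a g⁴ / 2 - b g²`, which satisfies
`H' = -(4 / r) (1 - g²) f² = (4 / r) (-f) g'`.

At a return point `f = 0`, `f' ≥ 0` forces `g (b - a g²) ≥ 0`, hence `H ≤ 0` (`energy_end_nonpos`).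
On the other hand `H(0)` is close to `a / 2 - b > 0` when `x` is close to `1`, so it suffices to
bound the dissipated energy. For `x < 1`, as long as `f < 0` and `g > 0`:

* `g ≤ 1`, so `g` decreases (`g_le_one`), and `f ≥ -√a` (`f_ge`), `-f ≤ (a / 3) r` (`f_ge_linear`);
* hence `H - (4 a / 3) g` is nondecreasing everywhere, and `H - (4 √a / T) g` is nondecreasing
  beyond any time `T`;
* `1 - g(r) ≤ (1 - x) exp (2 √a r)` (`one_sub_g_le`), so `g` stays near `1` up to time `T` when `x`
  is near `1`.

So the loss is at most `(4 a / 3) (1 - x) exp (2 √a T) + 4 √a / T`. Choosing first `T` large and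
then `1 - x` small makes `H` positive at the return point, a contradiction. For `x ≥ 1` the
component `g` remains at least `1`, which is incompatible with `g (b - a g²) ≥ 0`.
-/

/-- The set `I` of shooting parameters: `x > √(b/a)` such that the solution `(f_x, g_x)`
of the radial system with `f_x 0 = 0`, `g_x 0 = x` satisfies `f_x < 0` and `g_x > 0` on
`(0, r_x)` and `f_x r_x = 0` for some `r_x` in its (maximal) interval of existence.
Membership is expressed via the existence of a solution on a closed interval `[0, r_x]`. -/
def shootingSet (a b : ℝ) : Set ℝ :=
  {x : ℝ | Real.sqrt (b / a) < x ∧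
    ∃ rx : ℝ, 0 < rx ∧ ∃ f g : ℝ → ℝ,
      ContinuousOn f (Set.Icc 0 rx) ∧ ContinuousOn g (Set.Icc 0 rx) ∧
      f 0 = 0 ∧ g 0 = x ∧
      (∀ r ∈ Set.Ioc (0 : ℝ) rx,
        HasDerivAt f (g r * ((f r) ^ 2 - a * (g r) ^ 2 + b) - 2 / r * f r) r ∧
        HasDerivAt g (f r * (1 - (g r) ^ 2)) r) ∧
      (∀ r ∈ Set.Ioo (0 : ℝ) rx, f r < 0 ∧ 0 < g r) ∧
      f rx = 0}

open Set Filter Topology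

/-- A solution of the radial system on `[0, R]` with `g 0 = x`, for which `R` is a zero of `f` and
`f < 0 < g` on `(0, R)`. The equations are required on `(0, R]` only, because of the singular
coefficient `2 / r`. -/
structure IsReturning (a b x R : ℝ) (f g : ℝ → ℝ) : Prop where
  pos : 0 < R
  contF : ContinuousOn f (Icc 0 R)
  contG : ContinuousOn g (Icc 0 R)
  f_zero : f 0 = 0
  g_zero : g 0 = x
  derivF : ∀ r ∈ Ioc (0 : ℝ) R,
    HasDerivAt f (g r * ((f r) ^ 2 - a * (g r) ^ 2 + b) - 2 / r * f r) r
  derivG : ∀ r ∈ Ioc (0 : ℝ) R, HasDerivAt g (f r * (1 - (g r) ^ 2)) r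
  f_neg : ∀ r ∈ Ioo (0 : ℝ) R, f r < 0
  g_pos : ∀ r ∈ Ioo (0 : ℝ) R, 0 < g r
  f_end : f R = 0

lemma monotoneOn_of_hasDerivAt_nonneg {s R : ℝ} {φ φ' : ℝ → ℝ} (hc : ContinuousOn φ (Icc s R))
    (hd : ∀ r ∈ Ioo s R, HasDerivAt φ (φ' r) r) (hn : ∀ r ∈ Ioo s R, 0 ≤ φ' r) :
    MonotoneOn φ (Icc s R) := by
  refine monotoneOn_of_deriv_nonneg (convex_Icc s R) hc ?_ ?_
  · intro r hr
    rw [interior_Icc] at hr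
    exact (hd r hr).differentiableAt.differentiableWithinAt
  · intro r hr
    rw [interior_Icc] at hr
    rw [(hd r hr).deriv]
    exact hn r hr

/-- Barrier principle: a function that starts nonnegative and does not decrease where it is
negative stays nonnegative. -/
lemma nonneg_of_deriv_nonneg_of_neg {R : ℝ} {φ φ' : ℝ → ℝ} (hc : ContinuousOn φ (Icc 0 R))
    (h0 : 0 ≤ φ 0) (hd : ∀ r ∈ Ioo (0 : ℝ) R, HasDerivAt φ (φ' r) r)
    (hn : ∀ r ∈ Ioo (0 : ℝ) R, φ r < 0 → 0 ≤ φ' r) :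
    ∀ r ∈ Icc (0 : ℝ) R, 0 ≤ φ r := by
  intro r hr
  by_contra! hneg
  -- `s` is the last point of `[0, r]` at which `φ` is nonnegative
  have hcr : ContinuousOn φ (Icc 0 r) := hc.mono (Icc_subset_Icc_right hr.2)
  have hK : IsCompact (Icc 0 r ∩ φ ⁻¹' Ici 0) :=
    isCompact_Icc.of_isClosed_subset (hcr.preimage_isClosed_of_isClosed isClosed_Icc isClosed_Ici)
      inter_subset_left
  obtain ⟨s, ⟨hs, hs0⟩, hmax⟩ := hK.exists_isGreatest ⟨0, ⟨le_rfl, hr.1⟩, h0⟩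
  have hlt : ∀ t ∈ Ioc s r, φ t < 0 := by
    intro t ht
    by_contra! h
    exact absurd (hmax ⟨⟨hs.1.trans ht.1.le, ht.2⟩, h⟩) (not_le.2 ht.1)
  have hsub : ∀ t ∈ Ioo s r, t ∈ Ioo 0 R := fun t ht =>
    ⟨hs.1.trans_lt ht.1, ht.2.trans_le hr.2⟩
  have hm : MonotoneOn φ (Icc s r) :=
    monotoneOn_of_hasDerivAt_nonneg (hcr.mono (Icc_subset_Icc_left hs.1))
      (fun t ht => hd t (hsub t ht))
      (fun t ht => hn t (hsub t ht) (hlt t ⟨ht.1, ht.2.le⟩))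
  have := hm ⟨le_rfl, hs.2⟩ ⟨hs.2, le_rfl⟩ hs.2
  have hs0' : 0 ≤ φ s := hs0
  linarith

namespace IsReturning

variable {a b x R : ℝ} {f g : ℝ → ℝ}

lemma f_nonpos (h : IsReturning a b x R f g) : ∀ r ∈ Icc (0 : ℝ) R, f r ≤ 0 := by
  intro r hr
  rcases hr.1.eq_or_lt with rfl | h1
  · exact h.f_zero.le
  rcases hr.2.eq_or_lt with rfl | h2
  · exact h.f_end.le
  exact (h.f_neg r ⟨h1, h2⟩).le

lemma g_end_nonneg (h : IsReturning a b x R f g) : 0 ≤ g R := by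
  have hc := (h.derivG R ⟨h.pos, le_rfl⟩).continuousAt.tendsto.mono_left
    (nhdsWithin_le_nhds (s := Iio R))
  refine ge_of_tendsto hc ?_
  filter_upwards [Ioo_mem_nhdsLT h.pos] with r hr using (h.g_pos r hr).le

/-- Since `f` reaches `0` from below at `R`, its derivative there, `g (b - a g²)`, is
nonnegative. -/
lemma deriv_end_nonneg (h : IsReturning a b x R f g) : 0 ≤ g R * (b - a * g R ^ 2) := by
  have hd := h.derivF R ⟨h.pos, le_rfl⟩
  have hs := (hasDerivWithinAt_iff_tendsto_slope' (s := Iio R) (by simp)).1 hd.hasDerivWithinAt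
  have := ge_of_tendsto (b := (0 : ℝ)) hs (by
    filter_upwards [Ioo_mem_nhdsLT h.pos] with r hr
    rw [slope_def_field, h.f_end]
    exact div_nonneg_of_nonpos (by linarith [h.f_neg r hr]) (by linarith [hr.2]))
  rw [h.f_end] at this
  linarith

lemma energy_end_nonpos (h : IsReturning a b x R f g) (hb : 0 < b) :
    (1 - g R ^ 2) * f R ^ 2 + a * g R ^ 4 / 2 - b * g R ^ 2 ≤ 0 := by
  have h1 := mul_nonneg h.g_end_nonneg h.deriv_end_nonneg
  rw [h.f_end]
  nlinarith [mul_nonneg hb.le (sq_nonneg (g R))]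

lemma exists_bound (h : IsReturning a b x R f g) :
    ∃ M N : ℝ, 0 ≤ M ∧ 0 ≤ N ∧ ∀ r ∈ Icc (0 : ℝ) R, -M ≤ f r ∧ g r ≤ N := by
  obtain ⟨M, hM⟩ := isCompact_Icc.exists_bound_of_continuousOn h.contF
  obtain ⟨N, hN⟩ := isCompact_Icc.exists_bound_of_continuousOn h.contG
  have h0 : (0 : ℝ) ∈ Icc (0 : ℝ) R := ⟨le_rfl, h.pos.le⟩
  refine ⟨M, N, (norm_nonneg _).trans (hM 0 h0), (norm_nonneg _).trans (hN 0 h0), fun r hr => ?_⟩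
  exact ⟨(abs_le.1 (hM r hr)).1, (abs_le.1 (hN r hr)).2⟩

lemma hasDerivAt_sub_mul_exp (h : IsReturning a b x R f g) (k : ℝ) :
    ∀ r ∈ Ioo (0 : ℝ) R, HasDerivAt (fun r => (g r - 1) * Real.exp (-(k * r)))
      (Real.exp (-(k * r)) * ((1 - g r) * (f r * (1 + g r) + k))) r := by
  intro r hr
  have h1 : HasDerivAt (fun r => Real.exp (-(k * r))) (Real.exp (-(k * r)) * (-(k * 1))) r :=
    (((hasDerivAt_id r).const_mul k).neg).exp
  refine (((h.derivG r ⟨hr.1, hr.2.le⟩).sub_const 1).mul h1).congr_deriv ?_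
  ring

lemma continuousOn_sub_mul_exp (h : IsReturning a b x R f g) (k : ℝ) :
    ContinuousOn (fun r => (g r - 1) * Real.exp (-(k * r))) (Icc 0 R) :=
  (h.contG.sub continuousOn_const).mul (by fun_prop)

/-- The region `g ≥ 1` is invariant: `g = 1` is an equilibrium of the second equation. The
exponential weight turns the local Lipschitz estimate into a monotonicity statement. -/
lemma one_le_g (h : IsReturning a b x R f g) (hx : 1 ≤ x) : ∀ r ∈ Icc (0 : ℝ) R, 1 ≤ g r := by
  obtain ⟨M, N, hM, hN, hb⟩ := h.exists_bound
  intro r hr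
  have key := nonneg_of_deriv_nonneg_of_neg (h.continuousOn_sub_mul_exp (2 * M))
    (by simp [h.g_zero, hx]) (h.hasDerivAt_sub_mul_exp (2 * M)) (by
      intro r hr hneg
      have hg : g r - 1 < 0 := by
        by_contra! hc
        exact absurd (mul_nonneg hc (Real.exp_pos (-(2 * M * r))).le) (not_le.2 hneg)
      have hp := h.g_pos r hr
      have hf := (hb r ⟨hr.1.le, hr.2.le⟩).1
      refine mul_nonneg (Real.exp_pos _).le (mul_nonneg (by linarith) ?_)
      nlinarith [mul_nonneg (by linarith : 0 ≤ f r + M) (by linarith : 0 ≤ 1 + g r)]) r hr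
  have := nonneg_of_mul_nonneg_left key (Real.exp_pos _)
  linarith

/-- The region `g ≤ 1` is invariant, for the same reason as in `one_le_g`. -/
lemma g_le_one (h : IsReturning a b x R f g) (hx : x ≤ 1) : ∀ r ∈ Icc (0 : ℝ) R, g r ≤ 1 := by
  obtain ⟨M, N, hM, hN, hb⟩ := h.exists_bound
  intro r hr
  have key := nonneg_of_deriv_nonneg_of_neg (h.continuousOn_sub_mul_exp (M * (1 + N))).neg
    (by simp [h.g_zero, hx]) (fun r hr => (h.hasDerivAt_sub_mul_exp (M * (1 + N)) r hr).neg) (by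
      intro r hr hneg
      have hg : 0 < g r - 1 := by
        by_contra! hc
        have := mul_nonneg (neg_nonneg.2 hc) (Real.exp_pos (-(M * (1 + N) * r))).le
        simp only [Pi.neg_apply] at hneg
        linarith
      have hp := h.g_pos r hr
      obtain ⟨hf, hgN⟩ := hb r ⟨hr.1.le, hr.2.le⟩
      have e : ∀ E k : ℝ, -(E * ((1 - g r) * k)) = E * ((g r - 1) * k) := fun E k => by ring
      rw [e]
      refine mul_nonneg (Real.exp_pos _).le (mul_nonneg hg.le ?_)
      nlinarith [mul_nonneg (by linarith : 0 ≤ f r + M) (by linarith : 0 ≤ 1 + g r),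
        mul_nonneg hM (by linarith : 0 ≤ N - g r)]) r hr
  simp only [Pi.neg_apply] at key
  rw [← neg_mul] at key
  have := nonneg_of_mul_nonneg_left key (Real.exp_pos _)
  linarith

/-- Where `f < -√a` and `0 < g ≤ 1`, both terms of `f'` are positive, so `-√a` is a barrier. -/
lemma f_ge (h : IsReturning a b x R f g) (ha : 0 < a) (hb : 0 < b) (hx : x ≤ 1) :
    ∀ r ∈ Icc (0 : ℝ) R, -√a ≤ f r := by
  intro r hr
  have key := nonneg_of_deriv_nonneg_of_neg (h.contF.add (continuousOn_const (c := √a)))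
    (by simp [h.f_zero])
    (fun r hr => (h.derivF r ⟨hr.1, hr.2.le⟩).add_const (√a)) (by
      intro r hr hneg
      simp only [Pi.add_apply] at hneg
      have hp := h.g_pos r hr
      have hg1 := h.g_le_one hx r ⟨hr.1.le, hr.2.le⟩
      have hsq : a ≤ f r ^ 2 := by
        nlinarith [Real.sq_sqrt ha.le, Real.sqrt_nonneg a]
      have hg2 : a * g r ^ 2 ≤ a * 1 :=
        mul_le_mul_of_nonneg_left (pow_le_one₀ hp.le hg1) ha.le
      have h1 : 0 ≤ g r * (f r ^ 2 - a * g r ^ 2 + b) := mul_nonneg hp.le (by linarith)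
      have h2 : 2 / r * f r ≤ 0 :=
        mul_nonpos_of_nonneg_of_nonpos (div_nonneg (by norm_num) hr.1.le) (h.f_neg r hr).le
      linarith) r hr
  simp only [Pi.add_apply] at key
  linarith

/-- The linear bound near the origin, from `(r² f)' ≥ -a r²`. -/
lemma f_ge_linear (h : IsReturning a b x R f g) (ha : 0 < a) (hb : 0 < b) (hx : x ≤ 1) :
    ∀ r ∈ Ioo (0 : ℝ) R, -f r ≤ a / 3 * r := by
  intro r hr
  have hm : MonotoneOn (fun r => r ^ 2 * f r + a / 3 * r ^ 3) (Icc 0 R) := by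
    refine monotoneOn_of_hasDerivAt_nonneg
      (φ' := fun r => r ^ 2 * (g r * (f r ^ 2 - a * g r ^ 2 + b) + a)) ?_ ?_ ?_
    · exact ((continuousOn_id.pow 2).mul h.contF).add (by fun_prop)
    · intro r hr
      refine (((hasDerivAt_pow 2 r).mul (h.derivF r ⟨hr.1, hr.2.le⟩)).add
        ((hasDerivAt_pow 3 r).const_mul (a / 3))).congr_deriv ?_
      have := hr.1.ne'
      field_simp
      push_cast
      ring
    · intro r hr
      have hp := h.g_pos r hr
      have hg1 := h.g_le_one hx r ⟨hr.1.le, hr.2.le⟩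
      have hg3 : a * g r ^ 3 ≤ a * 1 :=
        mul_le_mul_of_nonneg_left (pow_le_one₀ hp.le hg1) ha.le
      refine mul_nonneg (sq_nonneg _) ?_
      nlinarith [mul_nonneg hp.le (sq_nonneg (f r)), mul_pos hp hb]
  have := hm ⟨le_rfl, h.pos.le⟩ ⟨hr.1.le, hr.2.le⟩ hr.1.le
  have hr2 : 0 < r ^ 2 := pow_pos hr.1 2
  have h3 : 0 ≤ r ^ 2 * (f r + a / 3 * r) := by
    simp only at this
    nlinarith
  have := nonneg_of_mul_nonneg_right h3 hr2
  linarith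

lemma g_antitone (h : IsReturning a b x R f g) (hx : x ≤ 1) : AntitoneOn g (Icc 0 R) := by
  have := monotoneOn_of_hasDerivAt_nonneg h.contG.neg
    (fun r hr => (h.derivG r ⟨hr.1, hr.2.le⟩).neg) (by
      intro r hr
      have hg1 := h.g_le_one hx r ⟨hr.1.le, hr.2.le⟩
      have hg2 : g r ^ 2 ≤ 1 := pow_le_one₀ (h.g_pos r hr).le hg1
      nlinarith [h.f_neg r hr])
  intro s hs t ht hst
  have := this hs ht hst
  simp only [Pi.neg_apply] at this
  linarith

lemma one_sub_g_le (h : IsReturning a b x R f g) (ha : 0 < a) (hb : 0 < b) (hx : x ≤ 1) :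
    ∀ r ∈ Icc (0 : ℝ) R, 1 - g r ≤ (1 - x) * Real.exp (2 * √a * r) := by
  intro r hr
  have hm := monotoneOn_of_hasDerivAt_nonneg (h.continuousOn_sub_mul_exp (2 * √a))
    (h.hasDerivAt_sub_mul_exp (2 * √a)) (by
      intro r hr
      have hp := h.g_pos r hr
      have hr' : r ∈ Icc (0 : ℝ) R := ⟨hr.1.le, hr.2.le⟩
      have hg1 := h.g_le_one hx r hr'
      have hf := h.f_ge ha hb hx r hr'
      refine mul_nonneg (Real.exp_pos _).le (mul_nonneg (by linarith) ?_)
      nlinarith [mul_nonneg (by linarith : 0 ≤ f r + √a) (by linarith : 0 ≤ 1 + g r),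
        mul_nonneg (Real.sqrt_nonneg a) (by linarith : 0 ≤ 1 - g r)])
  have h1 := hm ⟨le_rfl, h.pos.le⟩ hr hr.1
  simp only [h.g_zero, mul_zero, neg_zero, Real.exp_zero, mul_one] at h1
  have h2 := mul_le_mul_of_nonneg_right h1 (Real.exp_pos (2 * √a * r)).le
  rw [mul_assoc (g r - 1), ← Real.exp_add, neg_add_cancel, Real.exp_zero] at h2
  linarith

/-- If `-f / r ≤ c / 4` on `(s, R)`, the energy lost there is at most `c` times the decrease
of `g`, because `H' = (4 / r) (-f) g'` with `g' ≤ 0`. -/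
lemma energy_sub_monotone (h : IsReturning a b x R f g) (hx : x ≤ 1) {s c : ℝ} (hs : 0 ≤ s)
    (hc : ∀ r ∈ Ioo s R, -f r ≤ c / 4 * r) :
    MonotoneOn (fun r => (1 - g r ^ 2) * f r ^ 2 + a * g r ^ 4 / 2 - b * g r ^ 2 - c * g r)
      (Icc s R) := by
  have hsub : Icc s R ⊆ Icc 0 R := Icc_subset_Icc_left hs
  have hcf := h.contF.mono hsub
  have hcg := h.contG.mono hsub
  refine monotoneOn_of_hasDerivAt_nonneg
    (φ' := fun r => -f r * (1 - g r ^ 2) * (4 / r * f r + c)) (by fun_prop) ?_ ?_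
  · intro r hr
    have hr0 : 0 < r := hs.trans_lt hr.1
    have hF := h.derivF r ⟨hr0, hr.2.le⟩
    have hG := h.derivG r ⟨hr0, hr.2.le⟩
    refine (((((hG.pow 2).const_sub 1).mul (hF.pow 2)).add
      (((hG.pow 4).const_mul a).div_const 2)).sub ((hG.pow 2).const_mul b) |>.sub
      (hG.const_mul c)).congr_deriv ?_
    have := hr0.ne'
    simp only [Pi.pow_apply]
    field_simp
    push_cast
    ring
  · intro r hr
    have hr0 : 0 < r := hs.trans_lt hr.1
    have hg2 : g r ^ 2 ≤ 1 := pow_le_one₀ (h.g_pos r ⟨hr0, hr.2⟩).le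
      (h.g_le_one hx r ⟨hr0.le, hr.2.le⟩)
    refine mul_nonneg (mul_nonneg (by linarith [h.f_neg r ⟨hr0, hr.2⟩]) (by linarith)) ?_
    have h1 : 4 / r * f r + c = 4 / r * (f r + c / 4 * r) := by
      field_simp
    rw [h1]
    exact mul_nonneg (div_nonneg (by norm_num) hr0.le) (by linarith [hc r hr])

/-- The energy at the return point is at least its initial value minus the total dissipation, split
at the time `T`. -/
lemma energy_end_ge (h : IsReturning a b x R f g) (ha : 0 < a) (hb : 0 < b) (hx : x ≤ 1)
    {T : ℝ} (hT : 0 < T) :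
    a * x ^ 4 / 2 - b * x ^ 2 - 4 * a / 3 * ((1 - x) * Real.exp (2 * √a * T)) - 4 * √a / T ≤
      (1 - g R ^ 2) * f R ^ 2 + a * g R ^ 4 / 2 - b * g R ^ 2 := by
  have h0 : (0 : ℝ) ∈ Icc (0 : ℝ) R := ⟨le_rfl, h.pos.le⟩
  have hR : R ∈ Icc (0 : ℝ) R := ⟨h.pos.le, le_rfl⟩
  have hm1 := h.energy_sub_monotone hx (s := 0) (c := 4 * a / 3) le_rfl (by
    intro r hr
    linarith [h.f_ge_linear ha hb hx r hr])
  have hq : 0 ≤ 4 * √a / T := by positivity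
  -- the loss up to a time `S ≤ T`
  have first : ∀ S ∈ Icc (0 : ℝ) R, S ≤ T →
      a * x ^ 4 / 2 - b * x ^ 2 - 4 * a / 3 * ((1 - x) * Real.exp (2 * √a * T)) ≤
      (1 - g S ^ 2) * f S ^ 2 + a * g S ^ 4 / 2 - b * g S ^ 2 := by
    intro S hS hST
    have h1 := hm1 h0 hS hS.1
    simp only [h.f_zero, h.g_zero] at h1
    have h2 := h.one_sub_g_le ha hb hx S hS
    have h3 : Real.exp (2 * √a * S) ≤ Real.exp (2 * √a * T) :=
      Real.exp_le_exp.2 (mul_le_mul_of_nonneg_left hST (by positivity))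
    have h4 : x - g S ≤ (1 - x) * Real.exp (2 * √a * T) := by
      have := mul_le_mul_of_nonneg_left h3 (sub_nonneg.2 hx)
      linarith
    have h5 := mul_le_mul_of_nonneg_left h4 (by positivity : 0 ≤ 4 * a / 3)
    linarith
  rcases le_total R T with hRT | hTR
  · linarith [first R hR hRT]
  · have hTm : T ∈ Icc (0 : ℝ) R := ⟨hT.le, hTR⟩
    have hm2 := h.energy_sub_monotone hx (s := T) (c := 4 * √a / T) hT.le (by
      intro r hr
      have h1 := h.f_ge ha hb hx r ⟨(hT.trans hr.1).le, hr.2.le⟩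
      have h2 : √a ≤ 4 * √a / T / 4 * r := by
        have : 4 * √a / T / 4 * r = √a * (r / T) := by ring
        rw [this]
        exact le_mul_of_one_le_right (Real.sqrt_nonneg a) ((one_le_div hT).2 hr.1.le)
      linarith)
    have h1 := hm2 ⟨le_rfl, hTR⟩ ⟨hTR, le_rfl⟩ hTR
    simp only at h1
    have h2 : g T - g R ≤ 1 := by linarith [h.g_le_one hx T hTm, h.g_end_nonneg]
    have h3 := mul_le_mul_of_nonneg_left h2 hq
    linarith [first T hTm le_rfl]

lemma lt_one (h : IsReturning a b x R f g) (hb : 0 < b) (hab : 0 < a - 2 * b) : x < 1 := by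
  by_contra! hx
  have hg := h.one_le_g hx R ⟨h.pos.le, le_rfl⟩
  have h1 := h.deriv_end_nonneg
  have h2 := nonneg_of_mul_nonneg_right h1 (by linarith)
  nlinarith [mul_nonneg (by linarith : 0 ≤ a) (by nlinarith : 0 ≤ g R ^ 2 - 1)]

end IsReturning

/-- For `a, b > 0` with `a - 2b > 0`, the supremum of the shooting set `I`
is strictly smaller than `1`. -/
theorem shootingSet_sSup_lt_one
    (a b : ℝ) (ha : 0 < a) (hb : 0 < b) (hab : 0 < a - 2 * b) :
    sSup (shootingSet a b) < 1 := by
  -- `T` is chosen so that `4 √a / T` is half of the limiting initial energy `a / 2 - b`,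
  -- and `δ` so that the terms proportional to `1 - x` use up at most the other half
  set m : ℝ := a / 2 - b with hm
  have hm0 : 0 < m := by rw [hm]; linarith
  have hsa : 0 < √a := Real.sqrt_pos.2 ha
  set T : ℝ := 8 * √a / m with hTdef
  have hT : 0 < T := by positivity
  set C : ℝ := 2 * a + 4 * a / 3 * Real.exp (2 * √a * T) with hC
  have hC0 : 0 < C := by positivity
  set δ : ℝ := m / (2 * C) with hδ
  have hδ0 : 0 < δ := by positivity
  have hCδ : C * δ = m / 2 := by
    rw [hδ]; field_simp
  have hTm : 4 * √a / T = m / 2 := by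
    rw [hTdef]; field_simp; norm_num
  have hle : sSup (shootingSet a b) ≤ max 0 (1 - δ) := by
    refine Real.sSup_le ?_ (le_max_left _ _)
    rintro x ⟨hx, R, hR, f, g, hf, hg, hf0, hg0, hd, hs, hfR⟩
    have h : IsReturning a b x R f g :=
      ⟨hR, hf, hg, hf0, hg0, fun r hr => (hd r hr).1, fun r hr => (hd r hr).2,
        fun r hr => (hs r hr).1, fun r hr => (hs r hr).2, hfR⟩
    have hx0 : 0 ≤ x := (Real.sqrt_nonneg _).trans hx.le
    have hx1 := h.lt_one hb hab
    by_contra! hlt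
    have hd : 1 - x < δ := by linarith [le_max_right 0 (1 - δ)]
    have h1 := (h.energy_end_ge ha hb hx1.le hT).trans (h.energy_end_nonpos hb)
    have hx2 : x ^ 2 ≤ 1 := pow_le_one₀ hx0 hx1.le
    have hx4 : 1 - 4 * (1 - x) ≤ x ^ 4 := by
      have := one_add_mul_le_pow (by linarith : (-2 : ℝ) ≤ x - 1) 4
      push_cast at this
      rw [add_sub_cancel] at this
      linarith
    have h2 : C * (1 - x) < C * δ := mul_lt_mul_of_pos_left hd hC0
    have h3 := mul_le_mul_of_nonneg_left hx4 ha.le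
    have h4 := mul_le_mul_of_nonneg_left hx2 hb.le
    have h5 : C * (1 - x) = 2 * a * (1 - x) +
        4 * a / 3 * ((1 - x) * Real.exp (2 * √a * T)) := by rw [hC]; ring
    linarith
  exact hle.trans_lt (max_lt one_pos (by linarith))
end
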